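/- Let K be a convex body in ℝ^n (n ≥ 2) with 0 in its interior such that either the barycenter of K is at the origin or the barycenter of the polar body K° is at the origin. Then there exists an absolute constant C > 0 such that for every 1 ≤ k ≤ n−1 and every k-dimensional linear subspace H of ℝ^n, vrad(P_H(K_out)) ≤ (n/k)·C·(log n)^3 · vrad(P_H(K_in)), where the volume radii are computed in H. -/

import Mathlib

open MeasureTheory Metric Set
open scoped ENNReal RealInnerProductSpace Pointwise

noncomputable section

/-- The polar body of `K`. -/
def polarBody {n : ℕ} (K : Set (EuclideanSpace ℝ (Fin n))) : Set (EuclideanSpace ℝ (Fin n)) :=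
  {x | ∀ y ∈ K, ⟪x, y⟫ ≤ 1}

/-- The orthogonal projection of a set onto a subspace, viewed inside the ambient space. -/
def projSet {n : ℕ} (H : Submodule ℝ (EuclideanSpace ℝ (Fin n)))
    (A : Set (EuclideanSpace ℝ (Fin n))) : Set (EuclideanSpace ℝ (Fin n)) :=
  (fun x => (Submodule.orthogonalProjectionOnto H x : EuclideanSpace ℝ (Fin n))) '' A

/-- The volume radius of a subset of a `k`-dimensional subspace `H`: the `k`-th root of the
ratio of its `k`-dimensional (Hausdorff) volume to that of the unit ball of `H`. -/
def vrad {n : ℕ} (k : ℕ) (H : Submodule ℝ (EuclideanSpace ℝ (Fin n)))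
    (A : Set (EuclideanSpace ℝ (Fin n))) : ℝ≥0∞ :=
  (μH[(k : ℝ)] A / μH[(k : ℝ)] (closedBall (0 : EuclideanSpace ℝ (Fin n)) 1 ∩ (H : Set _)))
    ^ ((k : ℝ)⁻¹)

/-!
Fix the splitting of the space into `H` and its orthogonal complement.

Suppose first that `K` has barycenter `0`. By Brunn–Minkowski the volume `v a` of the projection
to `H` of `K ∩ (a - K)` is log-concave in `a`, so `1 / v` is convex. Integrating an affine minorant
of `1 / v` at `0` over `a = x + y` with `x, y ∈ K` kills its linear part and gives
`vol K ^ 2 / v 0 ≤ ∫ vol (K ∩ (a - K)) / v a`. The body `K ∩ (a - K)` is symmetric about `a / 2`,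
so the integrand is at most the volume of its central fibre, and the right-hand side is controlled
by the squares of the fibre volumes of `K`. The Rogers–Shephard section–projection inequality then
bounds the projection of `K` by `(C n / k) ^ k` times the projection `v 0` of `K_in`. The difference
body inequality replaces `K` by `K_out`.

If instead `K°` has barycenter `0`, a similar argument compares the sections by `H` of `K° - K°` and
`K° ∩ -K°`. These sections are, up to inclusion, the polars of the projections of `K_in` and
`K_out`, so it remains to compare the volume products of two symmetric bodies in `H`. Put such a
body `A` in Auerbach position, where it lies between balls of radii `1 / k` and `k`. Passing from
`A` to a multiple of `A ∩ A°` takes the square root of these radii and changes the volume product by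
at most a factor `C ^ k`. After about `log (log n)` steps the body is within a factor `2` of a ball,
at a total cost of a power of `log n`.
-/

section OneDimensional

theorem volume_add_volume_le_volume_add {A B : Set ℝ} (hA : IsCompact A) (hB : IsCompact B)
    (hA₀ : A.Nonempty) (hB₀ : B.Nonempty) : volume A + volume B ≤ volume (A + B) := by
  obtain ⟨a, ha, ha_max⟩ := hA.exists_isGreatest hA₀
  obtain ⟨b, hb, hb_min⟩ := hB.exists_isLeast hB₀
  -- The translates `A + b` and `a + B` meet only at `max A + min B`.
  have h_inter : (· + b) '' A ∩ (a + ·) '' B ⊆ {a + b} := by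
    rintro x ⟨⟨y, hy, rfl⟩, z, hz, hyz : a + z = y + b⟩
    have := ha_max hy
    have := hb_min hz
    exact mem_singleton_iff.2 (by linarith)
  have h_union : (· + b) '' A ∪ (a + ·) '' B ⊆ A + B := by
    rintro x (⟨y, hy, rfl⟩ | ⟨y, hy, rfl⟩)
    exacts [add_mem_add hy hb, add_mem_add ha hy]
  calc volume A + volume B = volume ((· + b) '' A) + volume ((a + ·) '' B) := by
        simp [image_add_right, image_add_left, measure_preimage_add, measure_preimage_add_right]
    _ = volume ((· + b) '' A ∪ (a + ·) '' B) :=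
        (measure_union₀' (hA.image (by fun_prop)).measurableSet.nullMeasurableSet
          (measure_mono_null h_inter (by simp))).symm
    _ ≤ volume (A + B) := measure_mono h_union

theorem measure_eq_iSup_isCompact_nonempty {X : Type*} [TopologicalSpace X] [MeasurableSpace X]
    {μ : Measure X} [μ.InnerRegularCompactLTTop] [SigmaFinite μ] {A : Set X}
    (hA : MeasurableSet A) :
    μ A = ⨆ S : {S : Set X // S ⊆ A ∧ IsCompact S ∧ S.Nonempty}, μ S := by
  refine le_antisymm ?_ (iSup_le fun S => measure_mono S.2.1)
  rw [hA.measure_eq_iSup_isCompact]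
  refine iSup_le fun S => iSup_le fun hSA => iSup_le fun hS => ?_
  rcases S.eq_empty_or_nonempty with rfl | hS₀
  · simp
  · exact le_iSup (fun S : {S : Set X // S ⊆ A ∧ IsCompact S ∧ S.Nonempty} => μ S)
      ⟨S, hSA, hS, hS₀⟩

variable {t : ℝ}

theorem volume_convexComb_le_of_subset {A B C : Set ℝ} (hA : MeasurableSet A)
    (hB : MeasurableSet B) (hA₀ : A.Nonempty) (hB₀ : B.Nonempty) (ht₀ : 0 < t) (ht₁ : t < 1)
    (hC : (1 - t) • A + t • B ⊆ C) :
    ENNReal.ofReal (1 - t) * volume A + ENNReal.ofReal t * volume B ≤ volume C := by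
  have : Nonempty {S : Set ℝ // S ⊆ A ∧ IsCompact S ∧ S.Nonempty} :=
    ⟨{hA₀.some}, by simpa using hA₀.some_mem, isCompact_singleton, singleton_nonempty _⟩
  have : Nonempty {S : Set ℝ // S ⊆ B ∧ IsCompact S ∧ S.Nonempty} :=
    ⟨{hB₀.some}, by simpa using hB₀.some_mem, isCompact_singleton, singleton_nonempty _⟩
  rw [measure_eq_iSup_isCompact_nonempty hA, measure_eq_iSup_isCompact_nonempty hB,
    ENNReal.mul_iSup, ENNReal.mul_iSup]
  refine ENNReal.iSup_add_iSup_le fun ⟨A', hA', hA'c, hA'₀⟩ ⟨B', hB', hB'c, hB'₀⟩ => ?_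
  calc ENNReal.ofReal (1 - t) * volume A' + ENNReal.ofReal t * volume B'
      = volume ((1 - t) • A') + volume (t • B') := by
        rw [Measure.addHaar_smul_of_nonneg _ (by linarith), Measure.addHaar_smul_of_nonneg _ ht₀.le]
        simp
    _ ≤ volume ((1 - t) • A' + t • B') :=
        volume_add_volume_le_volume_add (hA'c.smul _) (hB'c.smul _) hA'₀.smul_set hB'₀.smul_set
    _ ≤ volume C :=
        measure_mono ((add_subset_add (smul_set_mono hA') (smul_set_mono hB')).trans hC)

theorem ennreal_geom_mean_le_arith_mean (a b : ℝ≥0∞) (ht₀ : 0 < t) (ht₁ : t < 1) :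
    a ^ (1 - t) * b ^ t ≤ ENNReal.ofReal (1 - t) * a + ENNReal.ofReal t * b := by
  have ht' : 0 < 1 - t := by linarith
  obtain rfl | ha := eq_or_ne a ∞
  · rw [ENNReal.mul_top (by simpa using ht')]
    simp
  obtain rfl | hb := eq_or_ne b ∞
  · rw [ENNReal.mul_top (by simpa using ht₀)]
    simp
  lift a to NNReal using ha
  lift b to NNReal using hb
  have := Real.geom_mean_le_arith_mean2_weighted ht'.le ht₀.le a.2 b.2 (by ring)
  rw [← ENNReal.ofReal_coe_nnreal, ← ENNReal.ofReal_coe_nnreal,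
    ENNReal.ofReal_rpow_of_nonneg a.coe_nonneg ht'.le,
    ENNReal.ofReal_rpow_of_nonneg b.coe_nonneg ht₀.le,
    ← ENNReal.ofReal_mul (by positivity), ← ENNReal.ofReal_mul ht'.le, ← ENNReal.ofReal_mul ht₀.le,
    ← ENNReal.ofReal_add (by positivity) (by positivity)]
  exact ENNReal.ofReal_le_ofReal this

variable {f g h : ℝ → ℝ}

theorem convexComb_superlevel_subset (ht₀ : 0 < t) (ht₁ : t < 1)
    (hfgh : ∀ x y, f x ^ (1 - t) * g y ^ t ≤ h ((1 - t) * x + t * y)) {s : ℝ} (hs : 0 < s) :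
    (1 - t) • {x | s < f x} + t • {y | s < g y} ⊆ {z | s < h z} := by
  rintro _ ⟨_, ⟨x, hx, rfl⟩, _, ⟨y, hy, rfl⟩, rfl⟩
  calc s = s ^ (1 - t) * s ^ t := by rw [← Real.rpow_add hs]; simp
    _ < f x ^ (1 - t) * g y ^ t :=
        mul_lt_mul'' (Real.rpow_lt_rpow hs.le hx (by linarith)) (Real.rpow_lt_rpow hs.le hy ht₀)
          (by positivity) (by positivity)
    _ ≤ h ((1 - t) * x + t * y) := hfgh x y

theorem arith_mean_lintegral_le_of_isLUB_one (hf : Measurable f) (hg : Measurable g)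
    (hh : Measurable h) (hf₀ : 0 ≤ f) (hg₀ : 0 ≤ g) (hh₀ : 0 ≤ h)
    (hf₁ : IsLUB (range f) 1) (hg₁ : IsLUB (range g) 1) (ht₀ : 0 < t) (ht₁ : t < 1)
    (hfgh : ∀ x y, f x ^ (1 - t) * g y ^ t ≤ h ((1 - t) * x + t * y)) :
    ENNReal.ofReal (1 - t) * (∫⁻ x, ENNReal.ofReal (f x)) +
      ENNReal.ofReal t * (∫⁻ x, ENNReal.ofReal (g x)) ≤ ∫⁻ x, ENNReal.ofReal (h x) := by
  have measurable_tail (u : ℝ → ℝ) : Measurable fun s => volume {x : ℝ | s < u x} :=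
    Antitone.measurable fun a b hab => measure_mono fun x hx => lt_of_le_of_lt hab hx
  rw [lintegral_eq_lintegral_meas_lt _ (.of_forall hf₀) hf.aemeasurable,
    lintegral_eq_lintegral_meas_lt _ (.of_forall hg₀) hg.aemeasurable,
    lintegral_eq_lintegral_meas_lt _ (.of_forall hh₀) hh.aemeasurable,
    ← lintegral_const_mul _ (measurable_tail f), ← lintegral_const_mul _ (measurable_tail g),
    ← lintegral_add_left ((measurable_tail f).const_mul _)]
  refine setLIntegral_mono (measurable_tail h) fun s hs => ?_
  rcases lt_or_ge s 1 with hs₁ | hs₁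
  · exact volume_convexComb_le_of_subset (measurableSet_lt measurable_const hf)
      (measurableSet_lt measurable_const hg)
      (exists_range_iff (p := (s < ·)).1 ((lt_isLUB_iff hf₁).1 hs₁))
      (exists_range_iff (p := (s < ·)).1 ((lt_isLUB_iff hg₁).1 hs₁))
      ht₀ ht₁ (convexComb_superlevel_subset ht₀ ht₁ hfgh hs)
  · have superlevel_empty {u : ℝ → ℝ} (hu : IsLUB (range u) 1) : {x | s < u x} = ∅ :=
      eq_empty_of_forall_notMem fun x => not_lt.2 ((hu.1 (mem_range_self x)).trans hs₁)
    simp [superlevel_empty hf₁, superlevel_empty hg₁]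

theorem isLUB_range_div_iSup {ι : Type*} [Nonempty ι] {u : ι → ℝ} (hu : BddAbove (range u))
    (hpos : 0 < ⨆ x, u x) : IsLUB (range fun x => u x / ⨆ x, u x) 1 := by
  have := (isLUB_ciSup hu).mul_right (inv_nonneg.2 hpos.le)
  rwa [← range_comp, mul_inv_cancel₀ hpos.ne'] at this

theorem lintegral_ofReal_eq_zero_of_iSup_nonpos {u : ℝ → ℝ} (hu : BddAbove (range u))
    (h : ⨆ x, u x ≤ 0) : ∫⁻ x, ENNReal.ofReal (u x) = 0 := by
  simp [fun x => ENNReal.ofReal_of_nonpos ((le_ciSup hu x).trans h)]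

theorem lintegral_ofReal_div (u : ℝ → ℝ) {c : ℝ} (hc : 0 < c) :
    ∫⁻ x, ENNReal.ofReal (u x / c) = (∫⁻ x, ENNReal.ofReal (u x)) * (ENNReal.ofReal c)⁻¹ := by
  rw [← lintegral_mul_const' _ _ (by simpa using hc)]
  exact lintegral_congr fun x => by rw [ENNReal.ofReal_div_of_pos hc, div_eq_mul_inv]

theorem prekopa_leindler (hf : Measurable f) (hg : Measurable g) (hh : Measurable h)
    (hf₀ : 0 ≤ f) (hg₀ : 0 ≤ g) (hh₀ : 0 ≤ h) (hf_bdd : BddAbove (range f))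
    (hg_bdd : BddAbove (range g)) (ht₀ : 0 < t) (ht₁ : t < 1)
    (hfgh : ∀ x y, f x ^ (1 - t) * g y ^ t ≤ h ((1 - t) * x + t * y)) :
    (∫⁻ x, ENNReal.ofReal (f x)) ^ (1 - t) * (∫⁻ x, ENNReal.ofReal (g x)) ^ t
      ≤ ∫⁻ x, ENNReal.ofReal (h x) := by
  have ht' : 0 < 1 - t := by linarith
  rcases le_or_gt (⨆ x, f x) 0 with hF | hF
  · simp [lintegral_ofReal_eq_zero_of_iSup_nonpos hf_bdd hF, ENNReal.zero_rpow_of_pos ht']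
  rcases le_or_gt (⨆ x, g x) 0 with hG | hG
  · simp [lintegral_ofReal_eq_zero_of_iSup_nonpos hg_bdd hG, ENNReal.zero_rpow_of_pos ht₀]
  set F := ⨆ x, f x
  set G := ⨆ x, g x
  set M := F ^ (1 - t) * G ^ t with hM
  have hM₀ : 0 < M := by positivity
  have normalized := (ennreal_geom_mean_le_arith_mean _ _ ht₀ ht₁).trans <|
    arith_mean_lintegral_le_of_isLUB_one (h := fun x => h x / M)
      (hf.div_const F) (hg.div_const G) (hh.div_const M)
      (fun x => div_nonneg (hf₀ x) hF.le) (fun x => div_nonneg (hg₀ x) hG.le)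
      (fun x => div_nonneg (hh₀ x) hM₀.le)
      (isLUB_range_div_iSup hf_bdd hF) (isLUB_range_div_iSup hg_bdd hG) ht₀ ht₁ fun x y => by
        rw [Real.div_rpow (hf₀ x) hF.le, Real.div_rpow (hg₀ y) hG.le, div_mul_div_comm]
        exact div_le_div_of_nonneg_right (hfgh x y) hM₀.le
  have inv_M : (ENNReal.ofReal M)⁻¹ =
      (ENNReal.ofReal F)⁻¹ ^ (1 - t) * (ENNReal.ofReal G)⁻¹ ^ t := by
    rw [hM, ENNReal.ofReal_mul (by positivity), ENNReal.mul_inv (by simp) (by simp),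
      ENNReal.inv_rpow, ENNReal.inv_rpow, ENNReal.ofReal_rpow_of_pos hF,
      ENNReal.ofReal_rpow_of_pos hG]
  rw [lintegral_ofReal_div f hF, lintegral_ofReal_div g hG, lintegral_ofReal_div h hM₀,
    ENNReal.mul_rpow_of_nonneg _ _ ht'.le, ENNReal.mul_rpow_of_nonneg _ _ ht₀.le,
    mul_mul_mul_comm, ← inv_M] at normalized
  exact (ENNReal.mul_le_mul_iff_left (by simp) (by simpa using hM₀)).1 normalized

end OneDimensional

section BrunnMinkowski

/-- The Brunn–Minkowski inequality for `μ` in its multiplicative, dimension-free form. -/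
def MultiplicativeBrunnMinkowski {E : Type*} [AddCommGroup E] [Module ℝ E] [TopologicalSpace E]
    [MeasurableSpace E] (μ : Measure E) : Prop :=
  ∀ A B : Set E, IsCompact A → IsCompact B → ∀ t : ℝ, 0 < t → t < 1 →
    μ A ^ (1 - t) * μ B ^ t ≤ μ ((1 - t) • A + t • B)

theorem isCompact_prodMk_preimage {X Y : Type*} [TopologicalSpace X] [TopologicalSpace Y]
    [T1Space X] {S : Set (X × Y)} (hS : IsCompact S) (x : X) : IsCompact (Prod.mk x ⁻¹' S) := by
  have : Prod.mk x ⁻¹' S = Prod.snd '' (S ∩ Prod.fst ⁻¹' {x}) := by ext; simp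
  rw [this]
  exact (hS.inter_right (isClosed_singleton.preimage continuous_fst)).image continuous_snd

theorem bddAbove_range_toReal_measure_section {X Y : Type*} [TopologicalSpace X]
    [TopologicalSpace Y] [MeasurableSpace Y] {μ : Measure Y} [IsFiniteMeasureOnCompacts μ]
    {S : Set (X × Y)} (hS : IsCompact S) :
    BddAbove (range fun x => (μ (Prod.mk x ⁻¹' S)).toReal) := by
  refine ⟨(μ (Prod.snd '' S)).toReal, ?_⟩
  rintro _ ⟨x, rfl⟩
  exact ENNReal.toReal_mono (hS.image continuous_snd).measure_lt_top.ne
    (measure_mono fun y hy => ⟨_, hy, rfl⟩)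

theorem convexComb_section_subset {E F : Type*} [AddCommGroup E] [Module ℝ E] [AddCommGroup F]
    [Module ℝ F] (A B : Set (E × F)) (s t : ℝ) (x y : E) :
    s • (Prod.mk x ⁻¹' A) + t • (Prod.mk y ⁻¹' B) ⊆
      Prod.mk (s • x + t • y) ⁻¹' (s • A + t • B) := by
  rintro _ ⟨_, ⟨a, ha, rfl⟩, _, ⟨b, hb, rfl⟩, rfl⟩
  exact ⟨_, ⟨_, ha, rfl⟩, _, ⟨_, hb, rfl⟩, rfl⟩

variable {E F : Type*} [NormedAddCommGroup E] [NormedSpace ℝ E] [MeasurableSpace E]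
  [NormedAddCommGroup F] [NormedSpace ℝ F] [MeasurableSpace F]

namespace MultiplicativeBrunnMinkowski

theorem smul {μ : Measure E} (hμ : MultiplicativeBrunnMinkowski μ) (c : ℝ≥0∞) :
    MultiplicativeBrunnMinkowski (c • μ) := by
  intro A B hA hB t ht₀ ht₁
  simp only [Measure.smul_apply, smul_eq_mul]
  calc (c * μ A) ^ (1 - t) * (c * μ B) ^ t
      = c ^ (1 - t) * c ^ t * (μ A ^ (1 - t) * μ B ^ t) := by
        rw [ENNReal.mul_rpow_of_nonneg _ _ (by linarith), ENNReal.mul_rpow_of_nonneg _ _ ht₀.le,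
          mul_mul_mul_comm]
    _ = c * (μ A ^ (1 - t) * μ B ^ t) := by
        rw [← ENNReal.rpow_add_of_nonneg _ _ (by linarith) ht₀.le, sub_add_cancel,
          ENNReal.rpow_one]
    _ ≤ c * μ ((1 - t) • A + t • B) := by gcongr; exact hμ A B hA hB t ht₀ ht₁

theorem of_subsingleton [Subsingleton E] (μ : Measure E) : MultiplicativeBrunnMinkowski μ := by
  intro A B _ _ t ht₀ ht₁
  rcases A.eq_empty_or_nonempty with rfl | hA₀
  · simp [ENNReal.zero_rpow_of_pos (sub_pos.2 ht₁)]
  rcases B.eq_empty_or_nonempty with rfl | hB₀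
  · simp [ENNReal.zero_rpow_of_pos ht₀]
  rw [Subsingleton.eq_univ_of_nonempty hA₀, Subsingleton.eq_univ_of_nonempty hB₀,
    Subsingleton.eq_univ_of_nonempty (univ_nonempty.smul_set.add univ_nonempty.smul_set),
    ← ENNReal.rpow_add_of_nonneg _ _ (by linarith) ht₀.le, sub_add_cancel, ENNReal.rpow_one]

variable [BorelSpace E] [BorelSpace F]

theorem volume_prod [SecondCountableTopology F] {μ : Measure F} [IsFiniteMeasureOnCompacts μ]
    [SFinite μ] (hμ : MultiplicativeBrunnMinkowski μ) :
    MultiplicativeBrunnMinkowski ((volume : Measure ℝ).prod μ) := by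
  intro A B hA hB t ht₀ ht₁
  have hC : IsCompact ((1 - t) • A + t • B) := (hA.smul _).add (hB.smul _)
  have section_ne_top {S : Set (ℝ × F)} (hS : IsCompact S) (x : ℝ) : μ (Prod.mk x ⁻¹' S) ≠ ∞ :=
    (isCompact_prodMk_preimage hS x).measure_lt_top.ne
  have measurable_section {S : Set (ℝ × F)} (hS : IsCompact S) :
      Measurable fun x => (μ (Prod.mk x ⁻¹' S)).toReal :=
    (measurable_measure_prodMk_left hS.measurableSet).ennreal_toReal
  have prod_eq {S : Set (ℝ × F)} (hS : IsCompact S) :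
      (volume.prod μ) S = ∫⁻ x, ENNReal.ofReal (μ (Prod.mk x ⁻¹' S)).toReal := by
    simp only [Measure.prod_apply hS.measurableSet, ENNReal.ofReal_toReal (section_ne_top hS _)]
  rw [prod_eq hA, prod_eq hB, prod_eq hC]
  refine prekopa_leindler (measurable_section hA) (measurable_section hB) (measurable_section hC)
    (fun _ => ENNReal.toReal_nonneg) (fun _ => ENNReal.toReal_nonneg)
    (fun _ => ENNReal.toReal_nonneg) (bddAbove_range_toReal_measure_section hA)
    (bddAbove_range_toReal_measure_section hB) ht₀ ht₁ fun x y => ?_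
  rw [ENNReal.toReal_rpow, ENNReal.toReal_rpow, ← ENNReal.toReal_mul]
  refine ENNReal.toReal_mono (section_ne_top hC _) ?_
  exact (hμ _ _ (isCompact_prodMk_preimage hA x) (isCompact_prodMk_preimage hB y) t ht₀ ht₁).trans
    (measure_mono (convexComb_section_subset A B (1 - t) t x y))

theorem map {μ : Measure E} (hμ : MultiplicativeBrunnMinkowski μ) (e : E ≃L[ℝ] F) :
    MultiplicativeBrunnMinkowski (μ.map e) := by
  intro A B hA hB t ht₀ ht₁
  have map_apply (S : Set F) : μ.map e S = μ (e.symm '' S) := by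
    rw [e.symm.image_eq_preimage_symm]
    exact e.toHomeomorph.toMeasurableEquiv.map_apply S
  rw [map_apply, map_apply, map_apply, image_add, image_smul_set, image_smul_set]
  exact hμ _ _ (hA.image e.symm.continuous) (hB.image e.symm.continuous) t ht₀ ht₁

theorem of_continuousLinearEquiv [FiniteDimensional ℝ F] {μ : Measure E} [μ.IsAddHaarMeasure]
    (hμ : MultiplicativeBrunnMinkowski μ) (e : E ≃L[ℝ] F) (ν : Measure F) [ν.IsAddHaarMeasure] :
    MultiplicativeBrunnMinkowski ν := by
  have : (μ.map e).IsAddHaarMeasure := e.isAddHaarMeasure_map μ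
  rw [Measure.isAddLeftInvariant_eq_smul ν (μ.map e)]
  exact (hμ.map e).smul _

theorem volume_pi (d : ℕ) : MultiplicativeBrunnMinkowski (volume : Measure (Fin d → ℝ)) := by
  induction d with
  | zero => exact of_subsingleton _
  | succ d ih =>
    have e : (ℝ × (Fin d → ℝ)) ≃L[ℝ] (Fin (d + 1) → ℝ) :=
      ContinuousLinearEquiv.ofFinrankEq (by simp [add_comm])
    exact ih.volume_prod.of_continuousLinearEquiv e _

end MultiplicativeBrunnMinkowski

theorem brunn_minkowski [BorelSpace E] [FiniteDimensional ℝ E] (μ : Measure E)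
    [μ.IsAddHaarMeasure] : MultiplicativeBrunnMinkowski μ :=
  (MultiplicativeBrunnMinkowski.volume_pi (Module.finrank ℝ E)).of_continuousLinearEquiv
    (ContinuousLinearEquiv.ofFinrankEq (by simp)) μ

end BrunnMinkowski

section LogConcave

/-- Log-concavity of an extended nonnegative function on a real vector space, in the
multiplicative form that makes sense for the values `0` and `∞`. -/
def LogConcave {V : Type*} [AddCommGroup V] [Module ℝ V] (v : V → ℝ≥0∞) : Prop :=
  ∀ (a b : V) (t : ℝ), 0 < t → t < 1 → v a ^ (1 - t) * v b ^ t ≤ v ((1 - t) • a + t • b)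

theorem LogConcave.le_midpoint {V : Type*} [AddCommGroup V] [Module ℝ V] {v : V → ℝ≥0∞}
    (hv : LogConcave v) {a b : V} (hab : v a = v b) :
    v a ≤ v ((1 / 2 : ℝ) • a + (1 / 2 : ℝ) • b) := by
  have := hv a b (1 / 2) (by norm_num) (by norm_num)
  rw [← hab, ← ENNReal.rpow_add_of_nonneg _ _ (by norm_num) (by norm_num)] at this
  norm_num at this ⊢
  exact this

theorem LogConcave.convexOn_toReal_inv {V : Type*} [AddCommGroup V] [Module ℝ V] {U : Set V}
    {v : V → ℝ≥0∞} (hv : LogConcave v) (hU : Convex ℝ U) (hv₀ : ∀ a ∈ U, v a ≠ 0) :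
    ConvexOn ℝ U fun a => (v a)⁻¹.toReal := by
  refine convexOn_iff_forall_pos.2 ⟨hU, fun a ha b hb s t hs ht hst => ?_⟩
  obtain rfl : s = 1 - t := by linarith
  have inv_ne_top {a : V} (ha : a ∈ U) : (v a)⁻¹ ≠ ∞ := by simpa using hv₀ a ha
  have rpow_ne_zero {a : V} (ha : a ∈ U) {r : ℝ} (hr : 0 < r) : v a ^ r ≠ 0 :=
    (ENNReal.rpow_pos_of_nonneg (pos_iff_ne_zero.2 (hv₀ a ha)) hr.le).ne'
  have h_inv : (v ((1 - t) • a + t • b))⁻¹ ≤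
      ENNReal.ofReal (1 - t) * (v a)⁻¹ + ENNReal.ofReal t * (v b)⁻¹ := by
    refine le_trans ?_ (ennreal_geom_mean_le_arith_mean _ _ ht (by linarith))
    rw [ENNReal.inv_rpow, ENNReal.inv_rpow,
      ← ENNReal.mul_inv (.inl (rpow_ne_zero ha hs)) (.inr (rpow_ne_zero hb ht)),
      ENNReal.inv_le_inv]
    exact hv a b t ht (by linarith)
  have ha_fin := ENNReal.mul_ne_top ENNReal.ofReal_ne_top (inv_ne_top ha) (a := .ofReal (1 - t))
  have hb_fin := ENNReal.mul_ne_top ENNReal.ofReal_ne_top (inv_ne_top hb) (a := .ofReal t)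
  have := ENNReal.toReal_mono (ENNReal.add_ne_top.2 ⟨ha_fin, hb_fin⟩) h_inv
  rwa [ENNReal.toReal_add ha_fin hb_fin, ENNReal.toReal_mul, ENNReal.toReal_mul,
    ENNReal.toReal_ofReal hs.le, ENNReal.toReal_ofReal ht.le] at this

theorem logConcave_measure_section {V E : Type*} [AddCommGroup V] [Module ℝ V]
    [NormedAddCommGroup E] [NormedSpace ℝ E] [MeasurableSpace E] [BorelSpace E]
    [FiniteDimensional ℝ E] (μ : Measure E) [μ.IsAddHaarMeasure] {G : Set (V × E)}
    (hG : Convex ℝ G) (hG_sec : ∀ a, IsCompact (Prod.mk a ⁻¹' G)) :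
    LogConcave fun a => μ (Prod.mk a ⁻¹' G) := fun a b t ht₀ ht₁ =>
  (brunn_minkowski μ _ _ (hG_sec a) (hG_sec b) t ht₀ ht₁).trans <| measure_mono <|
    (convexComb_section_subset G G (1 - t) t a b).trans <|
      preimage_mono (convex_iff_pointwise_add_subset.1 hG (sub_nonneg.2 ht₁.le) ht₀.le (by ring))

variable {V : Type*} [NormedAddCommGroup V] [NormedSpace ℝ V] [FiniteDimensional ℝ V] {U : Set V}

theorem isOpen_strict_epigraph {φ : V → ℝ} (hU : IsOpen U) (hφ : ConvexOn ℝ U φ) :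
    IsOpen {p : V × ℝ | p.1 ∈ U ∧ φ p.1 < p.2} := by
  have h_eq : {p : V × ℝ | p.1 ∈ U ∧ φ p.1 < p.2} =
      Prod.fst ⁻¹' U ∩ (fun p : V × ℝ => φ p.1 - p.2) ⁻¹' Iio 0 := by
    ext; simp
  rw [h_eq]
  exact (((hφ.continuousOn hU).comp continuousOn_fst fun _ hp => hp).sub
    continuousOn_snd).isOpen_inter_preimage (hU.preimage continuous_fst) isOpen_Iio

theorem exists_subgradient {φ : V → ℝ} {x : V} (hU : IsOpen U) (hx : x ∈ U)
    (hφ : ConvexOn ℝ U φ) : ∃ l : V →L[ℝ] ℝ, ∀ a ∈ U, φ x + l (a - x) ≤ φ a := by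
  obtain ⟨f, hf⟩ := geometric_hahn_banach_open_point hφ.convex_strict_epigraph
    (isOpen_strict_epigraph hU hφ) (x := (x, φ x)) (by simp)
  set c := f (0, 1)
  have f_apply (a : V) (s : ℝ) : f (a, s) = f (a, 0) + s * c := by
    rw [← smul_eq_mul, ← map_smul, ← map_add]
    simp
  have hc : 0 < -c := by
    have := hf (x, φ x + 1) ⟨hx, by simp⟩
    rw [f_apply, f_apply x (φ x)] at this
    linarith
  refine ⟨(-c)⁻¹ • f.comp (ContinuousLinearMap.inl ℝ V ℝ), fun a ha => ?_⟩
  refine le_of_forall_gt_imp_ge_of_dense fun s hs => ?_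
  have separated : f (a, 0) - f (x, 0) ≤ -c * (s - φ x) := by
    have := hf (a, s) ⟨ha, hs⟩
    rw [f_apply, f_apply x (φ x)] at this
    linarith
  have := (inv_mul_le_iff₀ hc).2 separated
  rw [← map_sub, Prod.mk_sub_mk, sub_zero] at this
  change φ x + (-c)⁻¹ * f (a - x, 0) ≤ s
  linarith

theorem LogConcave.exists_affine_le_inv {v : V → ℝ≥0∞} (hv : LogConcave v) (hU : IsOpen U)
    (hU_conv : Convex ℝ U) (h0 : (0 : V) ∈ U) (hv₀ : ∀ a ∈ U, v a ≠ 0) :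
    ∃ l : V →L[ℝ] ℝ, ∀ a ∈ U, ENNReal.ofReal ((v 0)⁻¹.toReal + l a) ≤ (v a)⁻¹ := by
  obtain ⟨l, hl⟩ := exists_subgradient hU h0 (hv.convexOn_toReal_inv hU_conv hv₀)
  refine ⟨l, fun a ha => ENNReal.ofReal_le_of_le_toReal ?_⟩
  simpa using hl a ha

end LogConcave

theorem ofReal_integral_le_lintegral {X : Type*} [MeasurableSpace X] {μ : Measure X} {f : X → ℝ}
    {w : X → ℝ≥0∞} (hf : Integrable f μ) (hfw : ∀ᵐ x ∂μ, ENNReal.ofReal (f x) ≤ w x) :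
    ENNReal.ofReal (∫ x, f x ∂μ) ≤ ∫⁻ x, w x ∂μ := by
  refine le_trans ?_ (lintegral_mono_ae hfw)
  rw [integral_eq_lintegral_pos_part_sub_lintegral_neg_part hf]
  exact (ENNReal.ofReal_le_ofReal (sub_le_self _ ENNReal.toReal_nonneg)).trans
    ENNReal.ofReal_toReal_le

section Scaling

variable {E : Type*} [NormedAddCommGroup E] [NormedSpace ℝ E] [MeasurableSpace E] [BorelSpace E]
  [FiniteDimensional ℝ E] (μ : Measure E) [μ.IsAddHaarMeasure]

theorem measure_image_add_smul (A : Set E) (a : E) {t : ℝ} (ht : 0 ≤ t) :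
    μ ((fun x => a + t • x) '' A) = ENNReal.ofReal t ^ Module.finrank ℝ E * μ A := by
  rw [← image_image (a + ·) (t • ·) A, image_add_left, measure_preimage_add, image_smul,
    Measure.addHaar_smul_of_nonneg _ ht, ENNReal.ofReal_pow ht]

theorem measure_le_two_pow_mul_of_half {S T : Set E} (a : E)
    (h : ∀ x ∈ S, (1 / 2 : ℝ) • a + (1 / 2 : ℝ) • x ∈ T) :
    μ S ≤ 2 ^ Module.finrank ℝ E * μ T := by
  have h_sub : S ⊆ (fun y => -a + (2 : ℝ) • y) '' T := fun x hx => ⟨_, h x hx, by module⟩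
  simpa using (measure_mono h_sub).trans_eq (measure_image_add_smul μ T (-a) zero_le_two)

theorem lintegral_comp_half (f : E → ℝ≥0∞) :
    ∫⁻ x, f ((1 / 2 : ℝ) • x) ∂μ = 2 ^ Module.finrank ℝ E * ∫⁻ x, f x ∂μ := by
  have h_half : (1 / 2 : ℝ) ≠ 0 := by norm_num
  have h_map := Measure.map_addHaar_smul μ h_half
  have h_const : ENNReal.ofReal |((1 / 2 : ℝ) ^ Module.finrank ℝ E)⁻¹| =
      2 ^ Module.finrank ℝ E := by
    rw [one_div, inv_pow, inv_inv, abs_of_nonneg (by positivity), ENNReal.ofReal_pow zero_le_two]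
    simp
  rw [h_const] at h_map
  rw [← smul_eq_mul, ← lintegral_smul_measure, ← h_map]
  exact (lintegral_map_equiv f (Homeomorph.smulOfNeZero _ h_half).toMeasurableEquiv).symm

end Scaling

section AddFiber

/-- The fibre over `z` of the addition map `A × B → A + B`, projected to `A`. Its measure, as a
function of `z`, is the convolution of the indicators of `A` and `B`. -/
def addFiber {E : Type*} [AddGroup E] (A B : Set E) (z : E) : Set E :=
  A ∩ (fun x => z - x) ⁻¹' B

section Algebra

variable {E : Type*} [AddCommGroup E] {A B : Set E} {x z : E}

theorem addFiber_nonempty_iff : (addFiber A B z).Nonempty ↔ z ∈ A + B :=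
  ⟨fun ⟨x, hx⟩ => ⟨x, hx.1, z - x, hx.2, add_sub_cancel x z⟩,
    fun ⟨a, ha, b, hb, hab⟩ => ⟨a, ha, by simpa [← hab] using hb⟩⟩

theorem addFiber_zero (A B : Set E) : addFiber A B 0 = A ∩ -B := by
  ext; simp [addFiber]

theorem neg_addFiber (A B : Set E) (z : E) : -addFiber A B z = addFiber (-A) (-B) (-z) := by
  ext x; simp [addFiber, sub_eq_add_neg, add_comm]

theorem addFiber_mono {A' B' : Set E} (hA : A ⊆ A') (hB : B ⊆ B') (z : E) :
    addFiber A B z ⊆ addFiber A' B' z :=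
  inter_subset_inter hA (preimage_mono hB)

theorem isCompact_addFiber [TopologicalSpace E] [IsTopologicalAddGroup E] (hA : IsCompact A)
    (hB : IsClosed B) (z : E) : IsCompact (addFiber A B z) :=
  hA.inter_right (hB.preimage (by fun_prop))

theorem convex_addFiber [Module ℝ E] (hA : Convex ℝ A) (hB : Convex ℝ B) (z : E) :
    Convex ℝ (addFiber A B z) :=
  hA.inter (hB.affine_preimage (AffineMap.const ℝ E z - AffineMap.id ℝ E))

theorem image_addFiber_eq_section {X : Type*} (f : E → X) (A B : Set E) (z : E) :
    f '' addFiber A B z = Prod.mk z ⁻¹' ((fun p : E × E => (p.1 + p.2, f p.1)) '' A ×ˢ B) := by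
  ext y
  constructor
  · rintro ⟨x, hx, rfl⟩
    exact ⟨(x, z - x), hx, by simp⟩
  · rintro ⟨⟨a, b⟩, ⟨ha, hb⟩, h⟩
    obtain ⟨rfl, rfl⟩ := Prod.mk.inj h
    exact ⟨a, ⟨ha, by simpa using hb⟩, rfl⟩

end Algebra

section Image

variable {W E : Type*} [NormedAddCommGroup W] [NormedSpace ℝ W]
  [NormedAddCommGroup E] [NormedSpace ℝ E] [MeasurableSpace E] [BorelSpace E]
  [FiniteDimensional ℝ E] (μ : Measure E) [μ.IsAddHaarMeasure] {A B : Set W}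

theorem logConcave_measure_image_addFiber (f : W →L[ℝ] E) (hA : IsCompact A)
    (hA_conv : Convex ℝ A) (hB : IsCompact B) (hB_conv : Convex ℝ B) :
    LogConcave fun z => μ (f '' addFiber A B z) := by
  simp only [image_addFiber_eq_section]
  refine logConcave_measure_section μ ((hA_conv.prod hB_conv).linear_image
    ((LinearMap.fst ℝ W W + LinearMap.snd ℝ W W).prod (f.toLinearMap ∘ₗ LinearMap.fst ℝ W W)))
    fun z => ?_
  exact isCompact_prodMk_preimage ((hA.prod hB).image (by fun_prop)) z

theorem measurable_measure_image_addFiber [MeasurableSpace W] [BorelSpace W]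
    [FiniteDimensional ℝ W] (f : W →L[ℝ] E) (hA : IsCompact A) (hB : IsCompact B) :
    Measurable fun z => μ (f '' addFiber A B z) := by
  simp only [image_addFiber_eq_section]
  exact measurable_measure_prodMk_left ((hA.prod hB).image (by fun_prop)).measurableSet

end Image

variable {E : Type*} [NormedAddCommGroup E] [NormedSpace ℝ E] [MeasurableSpace E] [BorelSpace E]
  [FiniteDimensional ℝ E] (μ : Measure E) [μ.IsAddHaarMeasure] {A B : Set E}

theorem logConcave_measure_addFiber (hA : IsCompact A) (hA_conv : Convex ℝ A) (hB : IsCompact B)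
    (hB_conv : Convex ℝ B) : LogConcave fun z => μ (addFiber A B z) := by
  simpa using logConcave_measure_image_addFiber μ (.id ℝ E) hA hA_conv hB hB_conv

theorem lintegral_lintegral_add_eq (A : Set E) (hB : MeasurableSet B) {w : E → ℝ≥0∞}
    (hw : Measurable w) :
    ∫⁻ x in A, ∫⁻ y in B, w (x + y) ∂μ ∂μ = ∫⁻ z, w z * μ (addFiber A B z) ∂μ := by
  have inner_eq (x : E) : ∫⁻ y in B, w (x + y) ∂μ = ∫⁻ z, B.indicator 1 (z - x) * w z ∂μ := by
    rw [← lintegral_indicator hB,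
      ← lintegral_add_left_eq_self (fun z => B.indicator 1 (z - x) * w z) x]
    refine lintegral_congr fun y => ?_
    by_cases hy : y ∈ B <;> simp [hy]
  have fiber_eq (z : E) : w z * μ (addFiber A B z) =
      ∫⁻ x in A, B.indicator 1 (z - x) * w z ∂μ := by
    have hB_z : MeasurableSet ((fun x => z - x) ⁻¹' B) :=
      hB.preimage (measurable_const.sub measurable_id)
    rw [addFiber, inter_comm, ← Measure.restrict_apply hB_z, ← lintegral_indicator_one hB_z,
      ← lintegral_const_mul _ (measurable_one.indicator hB_z)]
    exact lintegral_congr fun x => mul_comm _ _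
  simp_rw [inner_eq, fiber_eq]
  refine lintegral_lintegral_swap (Measurable.aemeasurable ?_)
  exact ((measurable_one.indicator hB).comp (measurable_snd.sub measurable_fst)).mul
    (hw.comp measurable_snd)

theorem lintegral_measure_addFiber (A : Set E) (hB : MeasurableSet B) :
    ∫⁻ z, μ (addFiber A B z) ∂μ = μ A * μ B := by
  simpa [mul_comm] using (lintegral_lintegral_add_eq μ A hB measurable_one).symm

theorem measure_inter_neg_mul_measure_add_le (hA : IsCompact A) (hA_conv : Convex ℝ A)
    (hB : IsCompact B) (hB_conv : Convex ℝ B) :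
    μ (A ∩ -B) * μ (A + B) ≤ 4 ^ Module.finrank ℝ E * (μ A * μ B) := by
  have fiber_ge : ∀ z ∈ A + B,
      μ (A ∩ -B) ≤ 2 ^ Module.finrank ℝ E * μ (addFiber A B ((1 / 2 : ℝ) • z)) := by
    rintro _ ⟨a, ha, b, hb, rfl⟩
    refine measure_le_two_pow_mul_of_half μ a fun x hx => ⟨?_, ?_⟩
    · exact hA_conv ha hx.1 (by norm_num) (by norm_num) (by norm_num)
    · have := hB_conv hb hx.2 (a := 1 / 2) (b := 1 / 2) (by norm_num) (by norm_num) (by norm_num)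
      rw [mem_preimage]
      convert this using 1
      module
  calc μ (A ∩ -B) * μ (A + B) = ∫⁻ _ in A + B, μ (A ∩ -B) ∂μ := (setLIntegral_const _ _).symm
    _ ≤ ∫⁻ z in A + B, 2 ^ Module.finrank ℝ E * μ (addFiber A B ((1 / 2 : ℝ) • z)) ∂μ :=
        setLIntegral_mono' (hA.add hB).measurableSet fiber_ge
    _ ≤ ∫⁻ z, 2 ^ Module.finrank ℝ E * μ (addFiber A B ((1 / 2 : ℝ) • z)) ∂μ :=
        setLIntegral_le_lintegral _ _
    _ = 4 ^ Module.finrank ℝ E * (μ A * μ B) := by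
        rw [lintegral_const_mul' _ _ (by simp), lintegral_comp_half μ (fun z => μ (addFiber A B z)),
          lintegral_measure_addFiber μ A hB.measurableSet, ← mul_assoc, ← mul_pow]
        norm_num

theorem measure_mul_measure_le_of_neg_eq (hA : IsCompact A) (hA_conv : Convex ℝ A)
    (hA_symm : -A = A) (hB : IsCompact B) (hB_conv : Convex ℝ B) (hB_symm : -B = B) :
    μ A * μ B ≤ μ (A ∩ B) * μ (A + B) := by
  have fiber_le (z : E) : μ (addFiber A B z) ≤ (A + B).indicator (fun _ => μ (A ∩ B)) z := by
    by_cases hz : z ∈ A + B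
    · have h_symm : μ (addFiber A B z) = μ (addFiber A B (-z)) := by
        rw [← Measure.measure_neg, neg_addFiber, hA_symm, hB_symm]
      have := (logConcave_measure_addFiber μ hA hA_conv hB hB_conv).le_midpoint h_symm
      simpa [hz, addFiber_zero, hB_symm] using this
    · rw [not_nonempty_iff_eq_empty.1 (mt addFiber_nonempty_iff.1 hz)]
      simp
  calc μ A * μ B = ∫⁻ z, μ (addFiber A B z) ∂μ :=
        (lintegral_measure_addFiber μ A hB.measurableSet).symm
    _ ≤ ∫⁻ z, (A + B).indicator (fun _ => μ (A ∩ B)) z ∂μ := lintegral_mono fiber_le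
    _ = μ (A ∩ B) * μ (A + B) := lintegral_indicator_const (hA.add hB).measurableSet _

theorem measure_sub_self_eq_zero (hA_conv : Convex ℝ A) (hA₀ : μ A = 0) : μ (A - A) = 0 := by
  rcases A.eq_empty_or_nonempty with rfl | hA_ne
  · simp
  have h_interior : interior A = ∅ := (isOpen_interior.measure_eq_zero_iff μ).1
    (measure_mono_null interior_subset hA₀)
  have h_span : affineSpan ℝ A ≠ ⊤ := fun h => by
    rw [← hA_conv.interior_nonempty_iff_affineSpan_eq_top, h_interior] at h
    exact not_nonempty_empty h
  have h_direction : (affineSpan ℝ A).direction ≠ ⊤ :=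
    mt (AffineSubspace.direction_eq_top_iff_of_nonempty
      ((affineSpan_nonempty ℝ).2 hA_ne)).1 h_span
  refine measure_mono_null ?_ (Measure.addHaar_submodule μ _ h_direction)
  rintro _ ⟨a, ha, b, hb, rfl⟩
  exact AffineSubspace.vsub_mem_direction (subset_affineSpan ℝ A ha) (subset_affineSpan ℝ A hb)

theorem measure_sub_self_le (hA : IsCompact A) (hA_conv : Convex ℝ A) :
    μ (A - A) ≤ 4 ^ Module.finrank ℝ E * μ A := by
  rcases eq_or_ne (μ A) 0 with hA₀ | hA₀
  · simp [measure_sub_self_eq_zero μ hA_conv hA₀]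
  refine (ENNReal.mul_le_mul_iff_right hA₀ hA.measure_lt_top.ne).1 ?_
  have := measure_inter_neg_mul_measure_add_le μ hA hA_conv hA.neg hA_conv.neg
  rw [neg_neg, inter_self, Measure.measure_neg, ← sub_eq_add_neg] at this
  exact this.trans_eq (by ring)

end AddFiber

section SectionProjection

/-- The factor `e n / k` of the Rogers–Shephard section–projection inequality for a
`k`-dimensional projection of an `n`-dimensional body. -/
def rsFactor (n k : ℕ) : ℝ≥0∞ := ENNReal.ofReal (Real.exp 1 * n / k)

theorem add_div_pow_le_exp (k m : ℕ) : (((k : ℝ) + m) / m) ^ m ≤ Real.exp 1 ^ k := by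
  obtain rfl | hm := m.eq_zero_or_pos
  · simp
  have hm' : (m : ℝ) ≠ 0 := by positivity
  calc (((k : ℝ) + m) / m) ^ m = (k / m + 1 : ℝ) ^ m := by rw [add_div, div_self hm']
    _ ≤ Real.exp (k / m) ^ m := by gcongr; exact Real.add_one_le_exp _
    _ = Real.exp 1 ^ k := by
        rw [← Real.exp_nat_mul, ← Real.exp_nat_mul, mul_div_cancel₀ _ hm', mul_one]

theorem one_le_rsFactor_pow_mul (k m : ℕ) : 1 ≤ rsFactor (k + m) k ^ k *
    (ENNReal.ofReal (k / (k + m)) ^ k * ENNReal.ofReal (1 - k / (k + m)) ^ m) := by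
  obtain rfl | hk := k.eq_zero_or_pos
  · simp
  have h_exp : Real.exp 1 * ↑(k + m) / k * (k / (k + m)) = Real.exp 1 := by
    push_cast
    field_simp
  have h_one_sub : 1 - (k : ℝ) / (k + m) = m / (k + m) := by
    field_simp
    ring
  have h_prod : 1 ≤ (((k : ℝ) + m) / m) ^ m * ((m : ℝ) / (k + m)) ^ m := by
    obtain rfl | hm := m.eq_zero_or_pos
    · simp
    · rw [← mul_pow, div_mul_div_cancel₀ (by positivity), div_self (by positivity), one_pow]
  rw [← mul_assoc, ← mul_pow, rsFactor, ← ENNReal.ofReal_mul (by positivity), h_exp, h_one_sub,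
    ← ENNReal.ofReal_pow (by positivity), ← ENNReal.ofReal_pow (by positivity),
    ← ENNReal.ofReal_mul (by positivity), ENNReal.one_le_ofReal]
  exact h_prod.trans (by gcongr; exact add_div_pow_le_exp k m)

variable {E F : Type*} [NormedAddCommGroup E] [NormedSpace ℝ E] [MeasurableSpace E] [BorelSpace E]
  [FiniteDimensional ℝ E] (μ : Measure E) [μ.IsAddHaarMeasure]
  [NormedAddCommGroup F] [NormedSpace ℝ F] [MeasurableSpace F] [BorelSpace F]
  [FiniteDimensional ℝ F] (ν : Measure F) [ν.IsAddHaarMeasure] {K : Set (E × F)}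

theorem pow_mul_measure_fst_mul_measure_section_le (hK : IsCompact K) (hK_conv : Convex ℝ K)
    (y : E) {t : ℝ} (ht₀ : 0 ≤ t) (ht₁ : t ≤ 1) :
    ENNReal.ofReal t ^ Module.finrank ℝ E * ENNReal.ofReal (1 - t) ^ Module.finrank ℝ F *
      (μ (Prod.fst '' K) * ν (Prod.mk y ⁻¹' K)) ≤ (μ.prod ν) K := by
  have ht₁' : 0 ≤ 1 - t := sub_nonneg.2 ht₁
  set S := (fun x => (1 - t) • y + t • x) '' (Prod.fst '' K)
  have hS : IsCompact S := (hK.image continuous_fst).image (by fun_prop)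
  have section_ge : ∀ x ∈ S, ENNReal.ofReal (1 - t) ^ Module.finrank ℝ F * ν (Prod.mk y ⁻¹' K) ≤
      ν (Prod.mk x ⁻¹' K) := by
    rintro _ ⟨_, ⟨p, hp, rfl⟩, rfl⟩
    rw [← measure_image_add_smul ν _ (t • p.2) ht₁']
    refine measure_mono ?_
    rintro _ ⟨z, hz, rfl⟩
    have h_comb : (1 - t) • (y, z) + t • p = ((1 - t) • y + t • p.1, t • p.2 + (1 - t) • z) :=
      Prod.ext rfl (add_comm _ _)
    rw [mem_preimage, ← h_comb]
    exact hK_conv hz hp ht₁' ht₀ (by ring)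
  calc _ = ∫⁻ _ in S, ENNReal.ofReal (1 - t) ^ Module.finrank ℝ F * ν (Prod.mk y ⁻¹' K) ∂μ := by
        rw [setLIntegral_const, measure_image_add_smul μ _ _ ht₀]
        ring
    _ ≤ ∫⁻ x in S, ν (Prod.mk x ⁻¹' K) ∂μ := setLIntegral_mono' hS.measurableSet section_ge
    _ ≤ ∫⁻ x, ν (Prod.mk x ⁻¹' K) ∂μ := setLIntegral_le_lintegral _ _
    _ = (μ.prod ν) K := (Measure.prod_apply hK.measurableSet).symm

theorem measure_fst_mul_measure_section_le (hK : IsCompact K) (hK_conv : Convex ℝ K) (y : E) :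
    μ (Prod.fst '' K) * ν (Prod.mk y ⁻¹' K) ≤
      rsFactor (Module.finrank ℝ (E × F)) (Module.finrank ℝ E) ^ Module.finrank ℝ E *
        (μ.prod ν) K := by
  set k := Module.finrank ℝ E
  set m := Module.finrank ℝ F
  have ht₁ : (k : ℝ) / (k + m) ≤ 1 := div_le_one_of_le₀ (by simp) (by positivity)
  rw [Module.finrank_prod]
  calc μ (Prod.fst '' K) * ν (Prod.mk y ⁻¹' K)
      ≤ rsFactor (k + m) k ^ k *
          (ENNReal.ofReal (k / (k + m)) ^ k * ENNReal.ofReal (1 - k / (k + m)) ^ m) *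
          (μ (Prod.fst '' K) * ν (Prod.mk y ⁻¹' K)) :=
        le_mul_of_one_le_left' (one_le_rsFactor_pow_mul k m)
    _ ≤ rsFactor (k + m) k ^ k * (μ.prod ν) K := by
        rw [mul_assoc]
        gcongr
        exact pow_mul_measure_fst_mul_measure_section_le μ ν hK hK_conv y (by positivity) ht₁

end SectionProjection

section HalfPoint

variable {V : Type*} [NormedAddCommGroup V] [NormedSpace ℝ V] {K : Set V}

theorem half_smul_add_mem_interior (hK_conv : Convex ℝ K) {x y : V} (hx : x ∈ interior K)
    (hy : y ∈ interior K) : (1 / 2 : ℝ) • (x + y) ∈ interior K := by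
  rw [smul_add]
  exact hK_conv.interior hx hy (by norm_num) (by norm_num) (by norm_num)

theorem half_smul_mem_interior_addFiber {a : V} (ha : (1 / 2 : ℝ) • a ∈ interior K) :
    (1 / 2 : ℝ) • a ∈ interior (addFiber K K a) := by
  have h_reflect : a - (1 / 2 : ℝ) • a = (1 / 2 : ℝ) • a := by module
  rw [addFiber, interior_inter]
  refine ⟨ha, preimage_interior_subset_interior_preimage (by fun_prop) ?_⟩
  rwa [mem_preimage, h_reflect]

theorem section_addFiber_half {E F : Type*} [AddCommGroup E] [Module ℝ E] [AddCommGroup F]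
    (K : Set (E × F)) (a : E × F) :
    Prod.mk ((1 / 2 : ℝ) • a.1) ⁻¹' addFiber K K a =
      addFiber (Prod.mk ((1 / 2 : ℝ) • a.1) ⁻¹' K) (Prod.mk ((1 / 2 : ℝ) • a.1) ⁻¹' K) a.2 := by
  have h_reflect : a.1 - (1 / 2 : ℝ) • a.1 = (1 / 2 : ℝ) • a.1 := by module
  ext z
  simp only [addFiber, mem_preimage, mem_inter_iff]
  rw [show a - ((1 / 2 : ℝ) • a.1, z) = ((1 / 2 : ℝ) • a.1, a.2 - z) from Prod.ext h_reflect rfl]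

theorem measure_fst_addFiber_ne_zero {E F : Type*} [NormedAddCommGroup E] [NormedSpace ℝ E]
    [MeasurableSpace E] (μ : Measure E) [μ.IsOpenPosMeasure] [NormedAddCommGroup F]
    [NormedSpace ℝ F] {K : Set (E × F)} {a : E × F} (ha : (1 / 2 : ℝ) • a ∈ interior K) :
    μ (Prod.fst '' addFiber K K a) ≠ 0 :=
  (μ.measure_pos_of_nonempty_interior <| .mono (isOpenMap_fst.image_interior_subset _)
    ⟨_, _, half_smul_mem_interior_addFiber ha, rfl⟩).ne'

end HalfPoint

section CentralSection

variable {E F : Type*} [NormedAddCommGroup E] [NormedSpace ℝ E]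
  [NormedAddCommGroup F] [NormedSpace ℝ F] [MeasurableSpace F] [BorelSpace F]
  [FiniteDimensional ℝ F] (ν : Measure F) [ν.IsAddHaarMeasure] {D : Set (E × F)} {a : E × F}

theorem measure_section_le_central (hD : IsCompact D) (hD_conv : Convex ℝ D)
    (hD_symm : ∀ p ∈ D, a - p ∈ D) (x : E) :
    ν (Prod.mk x ⁻¹' D) ≤ ν (Prod.mk ((1 / 2 : ℝ) • a.1) ⁻¹' D) := by
  have h_reflect : Prod.mk (a.1 - x) ⁻¹' D = (fun z => a.2 - z) ⁻¹' (Prod.mk x ⁻¹' D) := by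
    ext z
    have h₁ : a - (a.1 - x, z) = (x, a.2 - z) := by ext <;> simp
    have h₂ : a - (x, a.2 - z) = (a.1 - x, z) := by ext <;> simp
    exact ⟨fun h => h₁.subst (hD_symm _ h), fun h => h₂.subst (hD_symm _ h)⟩
  have h_symm : ν (Prod.mk x ⁻¹' D) = ν (Prod.mk (a.1 - x) ⁻¹' D) := by
    rw [h_reflect, (Measure.measurePreserving_sub_left ν a.2).measure_preimage
      (isCompact_prodMk_preimage hD x).measurableSet.nullMeasurableSet]
  have := (logConcave_measure_section ν hD_conv (isCompact_prodMk_preimage hD)).le_midpoint h_symm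
  rwa [← smul_add, add_sub_cancel] at this

theorem measure_prod_le_fst_mul_central_section [MeasurableSpace E] [BorelSpace E]
    [SecondCountableTopology E] (μ : Measure E) [SFinite μ] (hD : IsCompact D)
    (hD_conv : Convex ℝ D) (hD_symm : ∀ p ∈ D, a - p ∈ D) :
    (μ.prod ν) D ≤ μ (Prod.fst '' D) * ν (Prod.mk ((1 / 2 : ℝ) • a.1) ⁻¹' D) := by
  rw [Measure.prod_apply hD.measurableSet, mul_comm,
    ← lintegral_indicator_const (hD.image continuous_fst).measurableSet]
  refine lintegral_mono fun x => ?_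
  by_cases hx : x ∈ Prod.fst '' D
  · simpa only [indicator_of_mem hx] using measure_section_le_central ν hD hD_conv hD_symm x
  · have : Prod.mk x ⁻¹' D = ∅ := eq_empty_of_forall_notMem fun z hz => hx ⟨_, hz, rfl⟩
    simp [this]

end CentralSection

section CenteredBody

variable {V : Type*} [NormedAddCommGroup V] [NormedSpace ℝ V] [MeasurableSpace V] [BorelSpace V]
  [FiniteDimensional ℝ V] (ρ : Measure V) [ρ.IsAddHaarMeasure] {K : Set V}

theorem ae_restrict_mem_interior (hK_conv : Convex ℝ K) :
    ∀ᵐ x ∂ρ.restrict K, x ∈ interior K := by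
  rw [← Measure.restrict_congr_set (interior_ae_eq_of_null_frontier (hK_conv.addHaar_frontier ρ))]
  exact ae_restrict_mem isOpen_interior.measurableSet

theorem setIntegral_const_add_clm (hK : IsCompact K) (hK_bar : ∫ x in K, x ∂ρ = 0) (c : ℝ)
    (l : V →L[ℝ] ℝ) : ∫ x in K, (c + l x) ∂ρ = ρ.real K * c := by
  have h_id : Integrable (fun x => x) (ρ.restrict K) :=
    continuous_id.continuousOn.integrableOn_compact hK
  have h_const : Integrable (fun _ => c) (ρ.restrict K) :=
    continuous_const.continuousOn.integrableOn_compact hK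
  rw [integral_add h_const (l.integrable_comp h_id), l.integral_comp_comm h_id, hK_bar, map_zero,
    add_zero, setIntegral_const, smul_eq_mul]

theorem ofReal_mul_sq_measure_le_lintegral (hK : IsCompact K) (hK_conv : Convex ℝ K)
    (hK_bar : ∫ x in K, x ∂ρ = 0) {w : V → ℝ≥0∞} (hw : Measurable w) {c : ℝ} {l : V →L[ℝ] ℝ}
    (hlw : ∀ x ∈ interior K, ∀ y ∈ interior K, ENNReal.ofReal (c + l (x + y)) ≤ w (x + y)) :
    ENNReal.ofReal c * ρ K ^ 2 ≤ ∫⁻ z, w z * ρ (addFiber K K z) ∂ρ := by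
  have h_integrable (c : ℝ) (l : V →L[ℝ] ℝ) : IntegrableOn (fun x => c + l x) K ρ :=
    ContinuousOn.integrableOn_compact hK (by fun_prop)
  have inner_le : ∀ x ∈ interior K,
      ENNReal.ofReal (ρ.real K * c + (ρ.real K • l) x) ≤ ∫⁻ y in K, w (x + y) ∂ρ := fun x hx => by
    have h_int := setIntegral_const_add_clm ρ hK hK_bar (c + l x) l
    rw [mul_add] at h_int
    refine h_int ▸ ofReal_integral_le_lintegral (h_integrable _ l) ?_
    filter_upwards [ae_restrict_mem_interior ρ hK_conv] with y hy
    simpa only [map_add, add_assoc] using hlw x hx y hy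
  have outer_le := ofReal_integral_le_lintegral (h_integrable _ _)
    ((ae_restrict_mem_interior ρ hK_conv).mono inner_le)
  rw [setIntegral_const_add_clm ρ hK hK_bar] at outer_le
  rw [← lintegral_lintegral_add_eq ρ K hK.measurableSet hw]
  refine outer_le.trans_eq' ?_
  rw [ENNReal.ofReal_mul measureReal_nonneg, ENNReal.ofReal_mul measureReal_nonneg,
    ofReal_measureReal hK.measure_lt_top.ne]
  ring

theorem inv_mul_sq_measure_le_lintegral (hK : IsCompact K) (hK_conv : Convex ℝ K)
    (h0 : (0 : V) ∈ interior K) (hK_bar : ∫ x in K, x ∂ρ = 0) {v : V → ℝ≥0∞}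
    (hv : LogConcave v) (hv_meas : Measurable v)
    (hv₀ : ∀ a, (1 / 2 : ℝ) • a ∈ interior K → v a ≠ 0) :
    (v 0)⁻¹ * ρ K ^ 2 ≤ ∫⁻ z, (v z)⁻¹ * ρ (addFiber K K z) ∂ρ := by
  have h0' : (1 / 2 : ℝ) • (0 : V) ∈ interior K := by rwa [smul_zero]
  -- The linear part of a supporting affine function of `v⁻¹` at `0` has integral zero over the
  -- centred body `K × K`, so Jensen's inequality holds for `v⁻¹` without further error terms.
  obtain ⟨l, hl⟩ := hv.exists_affine_le_inv (U := ((1 / 2 : ℝ) • ·) ⁻¹' interior K)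
    (isOpen_interior.preimage (by fun_prop)) (hK_conv.interior.smul_preimage _) h0' hv₀
  have := ofReal_mul_sq_measure_le_lintegral ρ hK hK_conv hK_bar hv_meas.inv fun x hx y hy =>
    hl (x + y) (half_smul_add_mem_interior hK_conv hx hy)
  rwa [ENNReal.ofReal_toReal (by simpa using hv₀ 0 h0')] at this

end CenteredBody

section CenteredProjection

variable {E F : Type*} [NormedAddCommGroup E] [NormedSpace ℝ E] [MeasurableSpace E] [BorelSpace E]
  [FiniteDimensional ℝ E] (μ : Measure E) [μ.IsAddHaarMeasure]
  [NormedAddCommGroup F] [NormedSpace ℝ F] [MeasurableSpace F] [BorelSpace F]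
  [FiniteDimensional ℝ F] (ν : Measure F) [ν.IsAddHaarMeasure] {K : Set (E × F)}

theorem measure_addFiber_le_fst_mul (hK : IsCompact K) (hK_conv : Convex ℝ K) (a : E × F) :
    (μ.prod ν) (addFiber K K a) ≤ μ (Prod.fst '' addFiber K K a) *
      ν (addFiber (Prod.mk ((1 / 2 : ℝ) • a.1) ⁻¹' K) (Prod.mk ((1 / 2 : ℝ) • a.1) ⁻¹' K) a.2) := by
  rw [← section_addFiber_half]
  exact measure_prod_le_fst_mul_central_section ν μ (isCompact_addFiber hK hK.isClosed a)
    (convex_addFiber hK_conv hK_conv a) fun p hp => ⟨hp.2, by simpa using hp.1⟩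

theorem lintegral_measure_addFiber_section_le (hK : IsCompact K) :
    ∫⁻ a : E × F, ν (addFiber (Prod.mk ((1 / 2 : ℝ) • a.1) ⁻¹' K)
      (Prod.mk ((1 / 2 : ℝ) • a.1) ⁻¹' K) a.2) ∂μ.prod ν ≤
    2 ^ Module.finrank ℝ E * ∫⁻ y, ν (Prod.mk y ⁻¹' K) ^ 2 ∂μ := by
  refine (lintegral_prod_le _).trans_eq ?_
  rw [← lintegral_comp_half μ fun y => ν (Prod.mk y ⁻¹' K) ^ 2]
  refine lintegral_congr fun x => ?_
  have h_meas := (isCompact_prodMk_preimage hK ((1 / 2 : ℝ) • x)).measurableSet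
  rw [sq, ← lintegral_measure_addFiber ν _ h_meas]

theorem lintegral_sq_measure_section_mul_le (hK : IsCompact K) (hK_conv : Convex ℝ K) :
    (∫⁻ y, ν (Prod.mk y ⁻¹' K) ^ 2 ∂μ) * μ (Prod.fst '' K) ≤
      rsFactor (Module.finrank ℝ (E × F)) (Module.finrank ℝ E) ^ Module.finrank ℝ E *
        (μ.prod ν) K ^ 2 := by
  have h_meas := measurable_measure_prodMk_left (ν := ν) hK.measurableSet
  rw [← lintegral_mul_const _ (h_meas.pow_const 2)]
  calc ∫⁻ y, ν (Prod.mk y ⁻¹' K) ^ 2 * μ (Prod.fst '' K) ∂μ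
      ≤ ∫⁻ y, ν (Prod.mk y ⁻¹' K) * (rsFactor (Module.finrank ℝ (E × F)) (Module.finrank ℝ E) ^
          Module.finrank ℝ E * (μ.prod ν) K) ∂μ := by
        refine lintegral_mono fun y => ?_
        rw [sq, mul_assoc, mul_comm _ (μ _)]
        exact mul_le_mul_right (measure_fst_mul_measure_section_le μ ν hK hK_conv y) _
    _ = _ := by
        rw [lintegral_mul_const _ h_meas, ← Measure.prod_apply hK.measurableSet]
        ring

theorem inv_measure_fst_mul_sq_measure_le (hK : IsCompact K) (hK_conv : Convex ℝ K)
    (h0 : (0 : E × F) ∈ interior K) (hK_bar : ∫ p in K, p ∂μ.prod ν = 0) :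
    (μ (Prod.fst '' (K ∩ -K)))⁻¹ * (μ.prod ν) K ^ 2 ≤
      2 ^ Module.finrank ℝ E * ∫⁻ y, ν (Prod.mk y ⁻¹' K) ^ 2 ∂μ := by
  have h_jensen := inv_mul_sq_measure_le_lintegral (μ.prod ν) hK hK_conv h0 hK_bar
    (logConcave_measure_image_addFiber μ (.fst ℝ E F) hK hK_conv hK hK_conv)
    (measurable_measure_image_addFiber μ (.fst ℝ E F) hK hK)
    fun a ha => measure_fst_addFiber_ne_zero μ ha
  rw [addFiber_zero] at h_jensen
  refine h_jensen.trans ((lintegral_mono fun a => ?_).trans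
    (lintegral_measure_addFiber_section_le μ ν hK))
  grw [measure_addFiber_le_fst_mul μ ν hK hK_conv a, ← mul_assoc]
  exact mul_le_of_le_one_left' (ENNReal.inv_mul_le_one _)

theorem measure_fst_le_of_barycenter_eq_zero (hK : IsCompact K) (hK_conv : Convex ℝ K)
    (h0 : (0 : E × F) ∈ interior K) (hK_bar : ∫ p in K, p ∂μ.prod ν = 0) :
    μ (Prod.fst '' K) ≤
      (2 * rsFactor (Module.finrank ℝ (E × F)) (Module.finrank ℝ E)) ^ Module.finrank ℝ E *
        μ (Prod.fst '' (K ∩ -K)) := by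
  have hK_pos : (μ.prod ν) K ^ 2 ≠ 0 :=
    pow_ne_zero 2 ((μ.prod ν).measure_pos_of_nonempty_interior ⟨0, h0⟩).ne'
  have hK_fin : (μ.prod ν) K ^ 2 ≠ ∞ := ENNReal.pow_ne_top hK.measure_lt_top.ne
  have h_fin : μ (Prod.fst '' (K ∩ -K)) ≠ ∞ :=
    ((hK.inter hK.neg).image continuous_fst).measure_lt_top.ne
  have h_pos : μ (Prod.fst '' (K ∩ -K)) ≠ 0 :=
    addFiber_zero K K ▸ measure_fst_addFiber_ne_zero μ (by rwa [smul_zero])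
  rw [mul_comm, ← ENNReal.inv_mul_le_iff h_pos h_fin, ← ENNReal.mul_le_mul_iff_right hK_pos hK_fin]
  calc (μ.prod ν) K ^ 2 * ((μ (Prod.fst '' (K ∩ -K)))⁻¹ * μ (Prod.fst '' K))
      = (μ (Prod.fst '' (K ∩ -K)))⁻¹ * (μ.prod ν) K ^ 2 * μ (Prod.fst '' K) := by ring
    _ ≤ 2 ^ Module.finrank ℝ E *
          ((∫⁻ y, ν (Prod.mk y ⁻¹' K) ^ 2 ∂μ) * μ (Prod.fst '' K)) := by
        rw [← mul_assoc]
        exact mul_le_mul_left (inv_measure_fst_mul_sq_measure_le μ ν hK hK_conv h0 hK_bar) _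
    _ ≤ _ := by
        grw [lintegral_sq_measure_section_mul_le μ ν hK hK_conv]
        rw [mul_pow]
        exact le_of_eq (by ring)

end CenteredProjection

section CenteredSection

section Fiber

variable {E : Type*} [NormedAddCommGroup E] [NormedSpace ℝ E] [MeasurableSpace E] [BorelSpace E]
  [FiniteDimensional ℝ E] (μ : Measure E) [μ.IsAddHaarMeasure] {A B : Set E}

theorem measurable_measure_addFiber (hA : MeasurableSet A) (hB : MeasurableSet B) :
    Measurable fun z => μ (addFiber A B z) :=
  measurable_measure_prodMk_left (s := {p : E × E | p.2 ∈ A ∧ p.1 - p.2 ∈ B})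
    ((hA.preimage measurable_snd).inter (hB.preimage (measurable_fst.sub measurable_snd)))

theorem lintegral_inv_mul_measure_addFiber_le (hA_conv : Convex ℝ A) :
    ∫⁻ z, (μ (addFiber A A z))⁻¹ * μ (addFiber A A z) ∂μ ≤ 2 ^ Module.finrank ℝ E * μ A := by
  have le_indicator (z : E) : (μ (addFiber A A z))⁻¹ * μ (addFiber A A z) ≤
      (A + A).indicator (fun _ => 1) z := by
    by_cases hz : z ∈ A + A
    · simpa only [indicator_of_mem hz] using ENNReal.inv_mul_le_one _
    · simp [not_nonempty_iff_eq_empty.1 (mt addFiber_nonempty_iff.1 hz)]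
  have h_double : A + A = (2 : ℝ) • A := by
    rw [← one_add_one_eq_two, hA_conv.add_smul zero_le_one zero_le_one, one_smul]
  calc _ ≤ 1 * μ (A + A) := (lintegral_mono le_indicator).trans (lintegral_indicator_const_le _ _)
    _ = 2 ^ Module.finrank ℝ E * μ A := by
        rw [one_mul, h_double, Measure.addHaar_smul_of_nonneg _ zero_le_two,
          ENNReal.ofReal_pow zero_le_two, ENNReal.ofReal_ofNat]

theorem ofReal_setIntegral_le_two_pow (hA : MeasurableSet A) (hA_conv : Convex ℝ A)
    (hA_fin : μ A ≠ ∞) {u : E → ℝ} (hu : IntegrableOn u A μ)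
    (hu_le : ∀ x ∈ A, ∀ y ∈ A, ENNReal.ofReal ((u x + u y) / 2) ≤ (μ (addFiber A A (x + y)))⁻¹) :
    ENNReal.ofReal (∫ x in A, u x ∂μ) ≤ 2 ^ Module.finrank ℝ E := by
  rcases eq_or_ne (μ A) 0 with hA₀ | hA₀
  · simp [Measure.restrict_eq_zero.2 hA₀]
  have h_const (c : ℝ) : Integrable (fun _ => c) (μ.restrict A) := integrableOn_const hA_fin
  have inner_le : ∀ x ∈ A, ENNReal.ofReal ((μ.real A * u x + ∫ y in A, u y ∂μ) / 2) ≤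
      ∫⁻ y in A, (μ (addFiber A A (x + y)))⁻¹ ∂μ := fun x hx => by
    have h_int : ∫ y in A, (u x + u y) / 2 ∂μ = (μ.real A * u x + ∫ y in A, u y ∂μ) / 2 := by
      rw [integral_div, integral_add (h_const _) hu, setIntegral_const, smul_eq_mul]
    exact h_int ▸ ofReal_integral_le_lintegral (((h_const _).add hu).div_const 2)
      ((ae_restrict_mem hA).mono (hu_le x hx))
  have outer_le := ofReal_integral_le_lintegral
    (((hu.const_mul (μ.real A)).add (h_const (∫ y in A, u y ∂μ))).div_const 2)
    ((ae_restrict_mem hA).mono inner_le)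
  have h_int : ∫ x in A, (μ.real A * u x + ∫ y in A, u y ∂μ) / 2 ∂μ =
      μ.real A * ∫ x in A, u x ∂μ := by
    rw [integral_div, integral_add (hu.const_mul _) (h_const _), integral_const_mul,
      setIntegral_const, smul_eq_mul, add_self_div_two]
  simp only [Pi.add_apply] at outer_le
  rw [h_int, ENNReal.ofReal_mul measureReal_nonneg, ofReal_measureReal hA_fin,
    lintegral_lintegral_add_eq μ A hA (w := fun z => (μ (addFiber A A z))⁻¹)
      (measurable_measure_addFiber μ hA hA).inv] at outer_le
  refine (ENNReal.mul_le_mul_iff_right hA₀ hA_fin).1 (outer_le.trans ?_)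
  rw [mul_comm]
  exact lintegral_inv_mul_measure_addFiber_le μ hA_conv

end Fiber

theorem ofReal_setIntegral_prod_le {X Y : Type*} [MeasurableSpace X] [MeasurableSpace Y]
    {μ : Measure X} {ν : Measure Y} [SFinite μ] [SFinite ν] {U : Set (X × Y)}
    (hU : MeasurableSet U) {f : X × Y → ℝ} (hf : IntegrableOn f U (μ.prod ν)) {C : ℝ≥0∞}
    (h_le : ∀ x, ENNReal.ofReal (∫ y in Prod.mk x ⁻¹' U, f (x, y) ∂ν) ≤ C) :
    ENNReal.ofReal (∫ p in U, f p ∂μ.prod ν) ≤ C * μ (Prod.fst '' U) := by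
  have hf' := (integrable_indicator_iff hU).2 hf
  rw [← integral_indicator hU, integral_prod _ hf']
  refine (ofReal_integral_le_lintegral hf'.integral_prod_left (ae_of_all _ fun x => ?_)).trans
    (lintegral_indicator_const_le (Prod.fst '' U) C)
  have h_section : ∫ y, U.indicator f (x, y) ∂ν = ∫ y in Prod.mk x ⁻¹' U, f (x, y) ∂ν :=
    integral_indicator (measurable_prodMk_left hU)
  rw [h_section]
  by_cases hx : x ∈ Prod.fst '' U
  · simpa only [indicator_of_mem hx] using h_le x
  · have : Prod.mk x ⁻¹' U = ∅ := eq_empty_of_forall_notMem fun y hy => hx ⟨_, hy, rfl⟩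
    simp [this]

theorem convex_prodMk_preimage {E F : Type*} [AddCommGroup E] [Module ℝ E] [AddCommGroup F]
    [Module ℝ F] {L : Set (F × E)} (hL_conv : Convex ℝ L) (q : F) :
    Convex ℝ (Prod.mk q ⁻¹' L) := fun x hx y hy a b ha hb hab => by
  have := hL_conv hx hy ha hb hab
  rwa [Prod.smul_mk, Prod.smul_mk, Prod.mk_add_mk, ← add_smul, hab, one_smul] at this

section FiberwiseDiff

/-- The body whose slice at height `q` is the difference body of the fibre of `L` over `q`; the
coordinates are swapped so that its projection to `E` is the central section of `L - L`. -/
def fiberwiseDiff {E F : Type*} [AddCommGroup E] (L : Set (F × E)) : Set (E × F) :=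
  {p | p.1 ∈ Prod.mk p.2 ⁻¹' L - Prod.mk p.2 ⁻¹' L}

variable {E F : Type*} [AddCommGroup E]

theorem section_sub_self_subset_fst_fiberwiseDiff [AddCommGroup F] (L : Set (F × E)) :
    Prod.mk 0 ⁻¹' (L - L) ⊆ Prod.fst '' fiberwiseDiff L := by
  rintro x ⟨⟨q, y⟩, hy, ⟨q', z⟩, hz, h⟩
  obtain ⟨hq, rfl⟩ := Prod.mk.inj h
  obtain rfl := sub_eq_zero.1 hq
  exact ⟨(y - z, q), ⟨y, hy, z, hz, rfl⟩, rfl⟩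

theorem fst_image_subset_section_fiberwiseDiff (L : Set (F × E)) :
    Prod.fst '' L ⊆ Prod.mk 0 ⁻¹' fiberwiseDiff L := by
  rintro _ ⟨p, hp, rfl⟩
  exact ⟨p.2, hp, p.2, hp, sub_self _⟩

theorem fiberwiseDiff_eq_image (L : Set (F × E)) : fiberwiseDiff L =
    (fun p : (F × E) × (F × E) => (p.1.2 - p.2.2, p.1.1)) '' (L ×ˢ L ∩ {p | p.1.1 = p.2.1}) := by
  ext ⟨x, q⟩
  constructor
  · rintro ⟨y, hy, z, hz, rfl⟩
    exact ⟨((q, y), (q, z)), ⟨⟨hy, hz⟩, rfl⟩, rfl⟩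
  · rintro ⟨⟨⟨q, y⟩, ⟨q', z⟩⟩, ⟨⟨hy, hz⟩, hq⟩, h⟩
    obtain rfl : q = q' := hq
    obtain ⟨rfl, rfl⟩ := Prod.mk.inj h
    exact ⟨y, hy, z, hz, rfl⟩

theorem isCompact_fiberwiseDiff [TopologicalSpace E] [IsTopologicalAddGroup E]
    [TopologicalSpace F] [T2Space F] {L : Set (F × E)} (hL : IsCompact L) :
    IsCompact (fiberwiseDiff L) := by
  rw [fiberwiseDiff_eq_image]
  exact ((hL.prod hL).inter_right (isClosed_eq (by fun_prop) (by fun_prop))).image (by fun_prop)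

theorem convex_fiberwiseDiff [Module ℝ E] [AddCommGroup F] [Module ℝ F] {L : Set (F × E)}
    (hL_conv : Convex ℝ L) : Convex ℝ (fiberwiseDiff L) := by
  rintro _ ⟨x, hx, x', hx', hxx'⟩ _ ⟨y, hy, y', hy', hyy'⟩ a b ha hb hab
  refine ⟨a • x + b • y, hL_conv hx hy ha hb hab, a • x' + b • y', hL_conv hx' hy' ha hb hab, ?_⟩
  simp only [Prod.fst_add, Prod.smul_fst, ← hxx', ← hyy']
  module

end FiberwiseDiff

variable {E F : Type*} [NormedAddCommGroup E] [NormedSpace ℝ E] [MeasurableSpace E] [BorelSpace E]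
  [FiniteDimensional ℝ E] (μ : Measure E) [μ.IsAddHaarMeasure]
  [NormedAddCommGroup F] [NormedSpace ℝ F] {L : Set (F × E)}

theorem measure_section_inter_neg_ne_zero {E F : Type*} [NormedAddCommGroup E]
    [MeasurableSpace E] (μ : Measure E) [μ.IsOpenPosMeasure] [NormedAddCommGroup F]
    {L : Set (F × E)} (h0 : (0 : F × E) ∈ interior L) : μ (Prod.mk 0 ⁻¹' (L ∩ -L)) ≠ 0 := by
  have h0' : (0 : F × E) ∈ interior (L ∩ -L) := by
    rw [mem_interior_iff_mem_nhds] at h0 ⊢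
    exact Filter.inter_mem h0 (neg_mem_nhds_zero _ h0)
  exact (μ.measure_pos_of_nonempty_interior
    ⟨0, preimage_interior_subset_interior_preimage (by fun_prop) h0'⟩).ne'

theorem logConcave_measure_addFiber_section (hL : IsCompact L) (hL_conv : Convex ℝ L) :
    LogConcave fun z : F × E => μ (addFiber (Prod.mk z.1 ⁻¹' L) (Prod.mk z.1 ⁻¹' L) z.2) := by
  have h_conv : Convex ℝ {p : (F × E) × E | (p.1.1, p.2) ∈ L ∧ (p.1.1, p.1.2 - p.2) ∈ L} :=
    (hL_conv.linear_preimage ((LinearMap.fst ℝ F E).prodMap LinearMap.id)).inter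
      (hL_conv.linear_preimage ((LinearMap.fst ℝ F E ∘ₗ LinearMap.fst ℝ (F × E) E).prod
        (LinearMap.snd ℝ F E ∘ₗ LinearMap.fst ℝ (F × E) E - LinearMap.snd ℝ (F × E) E)))
  refine logConcave_measure_section μ h_conv fun z => ?_
  have h_section := isCompact_prodMk_preimage hL z.1
  exact isCompact_addFiber h_section h_section.isClosed z.2

theorem exists_affine_le_inv_measure_addFiber_section [FiniteDimensional ℝ F] (hL : IsCompact L)
    (hL_conv : Convex ℝ L) (h0 : (0 : F × E) ∈ interior L) :
    ∃ l : F × E →L[ℝ] ℝ, ∀ q, ∀ x ∈ Prod.mk q ⁻¹' interior L, ∀ y ∈ Prod.mk q ⁻¹' interior L,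
      ENNReal.ofReal ((μ (Prod.mk 0 ⁻¹' (L ∩ -L)))⁻¹.toReal + l (q, x + y)) ≤
        (μ (addFiber (Prod.mk q ⁻¹' interior L) (Prod.mk q ⁻¹' interior L) (x + y)))⁻¹ := by
  let halve : F × E →L[ℝ] F × E :=
    (ContinuousLinearMap.id ℝ F).prodMap ((1 / 2 : ℝ) • ContinuousLinearMap.id ℝ E)
  obtain ⟨l, hl⟩ := (logConcave_measure_addFiber_section μ hL hL_conv).exists_affine_le_inv
    (U := halve ⁻¹' interior L) (isOpen_interior.preimage halve.continuous)
    (hL_conv.interior.linear_preimage halve.toLinearMap) (by simpa using h0) fun z hz =>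
      (μ.measure_pos_of_nonempty_interior ⟨_, half_smul_mem_interior_addFiber
        (preimage_interior_subset_interior_preimage (by fun_prop) hz)⟩).ne'
  have h_zero : addFiber (Prod.mk (0 : F × E).1 ⁻¹' L) (Prod.mk (0 : F × E).1 ⁻¹' L)
      (0 : F × E).2 = Prod.mk 0 ⁻¹' (L ∩ -L) := by
    ext; simp [addFiber]
  rw [h_zero] at hl
  refine ⟨l, fun q x hx y hy => ?_⟩
  have h_mid : (q, x + y) ∈ halve ⁻¹' interior L := by
    have := convex_prodMk_preimage hL_conv.interior q hx hy (a := 1 / 2) (b := 1 / 2)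
      (by norm_num) (by norm_num) (by norm_num)
    rwa [← smul_add] at this
  refine (hl _ h_mid).trans (ENNReal.inv_le_inv.2 (measure_mono ?_))
  exact addFiber_mono (preimage_mono interior_subset) (preimage_mono interior_subset) _

variable [MeasurableSpace F] [BorelSpace F] [FiniteDimensional ℝ F] (ν : Measure F)
  [ν.IsAddHaarMeasure]

theorem inv_measure_section_mul_measure_le (hL : IsCompact L) (hL_conv : Convex ℝ L)
    (h0 : (0 : F × E) ∈ interior L) (hL_bar : ∫ p in L, p ∂ν.prod μ = 0) :
    (μ (Prod.mk 0 ⁻¹' (L ∩ -L)))⁻¹ * (ν.prod μ) L ≤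
      2 ^ Module.finrank ℝ E * ν (Prod.fst '' L) := by
  obtain ⟨l, hl⟩ := exists_affine_le_inv_measure_addFiber_section μ hL hL_conv h0
  set c := (μ (Prod.mk 0 ⁻¹' (L ∩ -L)))⁻¹.toReal
  let double : F × E →L[ℝ] F × E :=
    (ContinuousLinearMap.id ℝ F).prodMap ((2 : ℝ) • ContinuousLinearMap.id ℝ E)
  have h_meas : MeasurableSet (interior L) := isOpen_interior.measurableSet
  have fiber_midpoint (q : F) (x y : E) :
      (c + l.comp double (q, x) + (c + l.comp double (q, y))) / 2 = c + l (q, x + y) := by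
    have h_double : double (q, x) + double (q, y) = (2 : ℝ) • (q, x + y) :=
      Prod.ext (two_smul ℝ q).symm (smul_add _ _ _).symm
    have := congrArg l h_double
    rw [map_add, map_smul, smul_eq_mul] at this
    simp only [ContinuousLinearMap.comp_apply]
    linarith
  have fiber_le (q : F) :
      ENNReal.ofReal (∫ x in Prod.mk q ⁻¹' interior L, (c + l.comp double (q, x)) ∂μ) ≤
        2 ^ Module.finrank ℝ E := by
    have hS := isCompact_prodMk_preimage hL q
    have hS_sub : Prod.mk q ⁻¹' interior L ⊆ Prod.mk q ⁻¹' L := preimage_mono interior_subset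
    refine ofReal_setIntegral_le_two_pow μ (measurable_prodMk_left h_meas)
      (convex_prodMk_preimage hL_conv.interior q) (measure_ne_top_of_subset hS_sub
        hS.measure_lt_top.ne) ?_ fun x hx y hy => ?_
    · exact (ContinuousOn.integrableOn_compact hS (by fun_prop)).mono_set hS_sub
    · exact fiber_midpoint q x y ▸ hl q x hx y hy
  have h_integrable : IntegrableOn (fun p => c + l.comp double p) L (ν.prod μ) :=
    ContinuousOn.integrableOn_compact hL (by fun_prop)
  have h_prod := ofReal_setIntegral_prod_le h_meas (h_integrable.mono_set interior_subset) fiber_le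
  have h_ae := interior_ae_eq_of_null_frontier (hL_conv.addHaar_frontier (ν.prod μ))
  rw [setIntegral_congr_set h_ae, setIntegral_const_add_clm _ hL hL_bar,
    ENNReal.ofReal_mul measureReal_nonneg, ofReal_measureReal hL.measure_lt_top.ne,
    mul_comm, ENNReal.ofReal_toReal
      (ENNReal.inv_ne_top.2 (measure_section_inter_neg_ne_zero μ h0))] at h_prod
  exact h_prod.trans (by gcongr; exact interior_subset)

theorem measure_le_fst_mul_section_inter_neg (hL : IsCompact L) (hL_conv : Convex ℝ L)
    (h0 : (0 : F × E) ∈ interior L) (hL_bar : ∫ p in L, p ∂ν.prod μ = 0) :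
    (ν.prod μ) L ≤
      2 ^ Module.finrank ℝ E * (ν (Prod.fst '' L) * μ (Prod.mk 0 ⁻¹' (L ∩ -L))) := by
  have h_fin : μ (Prod.mk 0 ⁻¹' (L ∩ -L)) ≠ ∞ :=
    (isCompact_prodMk_preimage (hL.inter hL.neg) 0).measure_lt_top.ne
  have := (ENNReal.inv_mul_le_iff (measure_section_inter_neg_ne_zero μ h0) h_fin).1
    (inv_measure_section_mul_measure_le μ ν hL hL_conv h0 hL_bar)
  exact this.trans_eq (by ring)

theorem measure_fiberwiseDiff_le (hL : IsCompact L) (hL_conv : Convex ℝ L) :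
    (μ.prod ν) (fiberwiseDiff L) ≤ 4 ^ Module.finrank ℝ E * (ν.prod μ) L := by
  rw [Measure.prod_apply_symm (isCompact_fiberwiseDiff hL).measurableSet,
    Measure.prod_apply hL.measurableSet,
    ← lintegral_const_mul _ (measurable_measure_prodMk_left hL.measurableSet)]
  exact lintegral_mono fun q =>
    measure_sub_self_le μ (isCompact_prodMk_preimage hL q) (convex_prodMk_preimage hL_conv q)

theorem measure_section_sub_self_le_of_barycenter_eq_zero (hL : IsCompact L)
    (hL_conv : Convex ℝ L) (h0 : (0 : F × E) ∈ interior L)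
    (hL_bar : ∫ p in L, p ∂ν.prod μ = 0) :
    μ (Prod.mk 0 ⁻¹' (L - L)) ≤
      (8 * rsFactor (Module.finrank ℝ (E × F)) (Module.finrank ℝ E)) ^ Module.finrank ℝ E *
        μ (Prod.mk 0 ⁻¹' (L ∩ -L)) := by
  have h_fin : ν (Prod.fst '' L) ≠ ∞ := (hL.image continuous_fst).measure_lt_top.ne
  have h_pos : ν (Prod.fst '' L) ≠ 0 := (ν.measure_pos_of_nonempty_interior <|
    .mono (isOpenMap_fst.image_interior_subset L) ⟨_, 0, h0, rfl⟩).ne'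
  refine (ENNReal.mul_le_mul_iff_right h_pos h_fin).1 ?_
  set R := rsFactor (Module.finrank ℝ (E × F)) (Module.finrank ℝ E)
  calc ν (Prod.fst '' L) * μ (Prod.mk 0 ⁻¹' (L - L))
      ≤ μ (Prod.fst '' fiberwiseDiff L) * ν (Prod.mk 0 ⁻¹' fiberwiseDiff L) := by
        rw [mul_comm]
        exact mul_le_mul' (measure_mono (section_sub_self_subset_fst_fiberwiseDiff L))
          (measure_mono (fst_image_subset_section_fiberwiseDiff L))
    _ ≤ R ^ Module.finrank ℝ E * (μ.prod ν) (fiberwiseDiff L) :=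
        measure_fst_mul_measure_section_le μ ν (isCompact_fiberwiseDiff hL)
          (convex_fiberwiseDiff hL_conv) 0
    _ ≤ R ^ Module.finrank ℝ E * (4 ^ Module.finrank ℝ E * (2 ^ Module.finrank ℝ E *
          (ν (Prod.fst '' L) * μ (Prod.mk 0 ⁻¹' (L ∩ -L))))) := by
        grw [measure_fiberwiseDiff_le μ ν hL hL_conv,
          measure_le_fst_mul_section_inter_neg μ ν hL hL_conv h0 hL_bar]
    _ = ν (Prod.fst '' L) * ((8 * R) ^ Module.finrank ℝ E * μ (Prod.mk 0 ⁻¹' (L ∩ -L))) := by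
        have h_eight : (8 : ℝ≥0∞) ^ Module.finrank ℝ E =
            4 ^ Module.finrank ℝ E * 2 ^ Module.finrank ℝ E := by rw [← mul_pow]; norm_num
        rw [mul_pow, h_eight]
        ring

end CenteredSection

section Polar

section PolarSet

variable {X : Type*} [NormedAddCommGroup X] [InnerProductSpace ℝ X] {A B : Set X}

/-- The one-sided polar of a set in a real inner product space; on `EuclideanSpace ℝ (Fin n)` it is
definitionally `polarBody`. -/
def polarSet (A : Set X) : Set X := {x | ∀ y ∈ A, ⟪x, y⟫ ≤ 1}

theorem polarSet_eq_biInter (A : Set X) : polarSet A = ⋂ y ∈ A, {x | ⟪x, y⟫ ≤ 1} := by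
  ext
  simp [polarSet]

theorem isClosed_polarSet (A : Set X) : IsClosed (polarSet A) := by
  rw [polarSet_eq_biInter]
  exact isClosed_biInter fun y _ => isClosed_le (by fun_prop) continuous_const

theorem convex_polarSet (A : Set X) : Convex ℝ (polarSet A) := by
  rw [polarSet_eq_biInter]
  exact convex_iInter₂ fun y _ => convex_halfSpace_le (innerₗ X |>.flip y).isLinear 1

theorem zero_mem_polarSet (A : Set X) : 0 ∈ polarSet A := fun y _ => by simp

theorem polarSet_neg (A : Set X) : polarSet (-A) = -polarSet A := by
  ext x
  refine ⟨fun h y hy => ?_, fun h y hy => ?_⟩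
  · simpa using h (-y) (neg_mem_neg.2 hy)
  · simpa using h (-y) hy

theorem polarSet_union (A B : Set X) : polarSet (A ∪ B) = polarSet A ∩ polarSet B := by
  simp only [polarSet_eq_biInter, biInter_union]

theorem polarSet_convexHull (A : Set X) : polarSet (convexHull ℝ A) = polarSet A :=
  Subset.antisymm (fun _ hx y hy => hx y (subset_convexHull ℝ A hy)) fun x hx =>
    convexHull_min hx (convex_halfSpace_le (innerₗ X x).isLinear 1)

theorem polarSet_smul (A : Set X) {s : ℝ} (hs : 0 < s) : polarSet (s • A) = s⁻¹ • polarSet A := by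
  ext x
  rw [mem_smul_set_iff_inv_smul_mem₀ (inv_ne_zero hs.ne'), inv_inv]
  simp only [polarSet, mem_ofPred_eq, ← image_smul, forall_mem_image, real_inner_smul_left,
    real_inner_smul_right]

theorem closedBall_subset_polarSet {r : ℝ} (h : A ⊆ closedBall 0 r) :
    closedBall 0 r⁻¹ ⊆ polarSet A := fun x hx y hy => by
  have hy := mem_closedBall_zero_iff.1 (h hy)
  have hr : 0 ≤ r := (norm_nonneg y).trans hy
  calc ⟪x, y⟫ ≤ ‖x‖ * ‖y‖ := real_inner_le_norm x y
    _ ≤ r⁻¹ * r := by gcongr; exact mem_closedBall_zero_iff.1 hx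
    _ ≤ 1 := inv_mul_le_one

theorem polarSet_subset_closedBall {r : ℝ} (hr : 0 < r) (h : closedBall 0 r ⊆ A) :
    polarSet A ⊆ closedBall 0 r⁻¹ := fun x hx => by
  rw [mem_closedBall_zero_iff]
  rcases eq_or_ne x 0 with rfl | hx₀
  · simpa using hr.le
  have hx_norm : 0 < ‖x‖ := norm_pos_iff.2 hx₀
  have h_mem : (r * ‖x‖⁻¹) • x ∈ A := h (by
    rw [mem_closedBall_zero_iff, norm_smul, Real.norm_of_nonneg (by positivity), mul_assoc,
      inv_mul_cancel₀ hx_norm.ne', mul_one])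
  have := hx _ h_mem
  rw [real_inner_smul_right, real_inner_self_eq_norm_sq] at this
  field_simp at this ⊢
  linarith

theorem zero_mem_interior_polarSet (hA : Bornology.IsBounded A) : 0 ∈ interior (polarSet A) := by
  obtain ⟨r, hr, h⟩ := hA.subset_closedBall_lt 0 0
  exact mem_interior.2 ⟨ball 0 r⁻¹, ball_subset_closedBall.trans (closedBall_subset_polarSet h),
    isOpen_ball, mem_ball_self (inv_pos.2 hr)⟩

theorem isCompact_polarSet [FiniteDimensional ℝ X] (h0 : (0 : X) ∈ interior A) :
    IsCompact (polarSet A) := by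
  obtain ⟨r, hr, h⟩ := nhds_basis_closedBall.mem_iff.1 (mem_interior_iff_mem_nhds.1 h0)
  exact (isCompact_closedBall 0 r⁻¹).of_isClosed_subset (isClosed_polarSet A)
    (polarSet_subset_closedBall hr h)

theorem polarSet_inter_polarSet_subset_add [CompleteSpace X] (hA : IsCompact A)
    (hA_conv : Convex ℝ A) (hA₀ : 0 ∈ A) (hB : IsClosed B) (hB_conv : Convex ℝ B) (hB₀ : 0 ∈ B) :
    polarSet (polarSet A ∩ polarSet B) ⊆ A + B := by
  intro y hy
  by_contra hn
  obtain ⟨f, u, hf, hu⟩ := geometric_hahn_banach_closed_point (hA_conv.add hB_conv)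
    (hB.add_left_of_isCompact hA) hn
  obtain ⟨x, rfl⟩ := (InnerProductSpace.toDual ℝ X).surjective f
  simp only [InnerProductSpace.toDual_apply_apply] at hf hu
  have hu₀ : 0 < u := by simpa using hf 0 ⟨0, hA₀, 0, hB₀, add_zero 0⟩
  have mem_polarSet {C : Set X} (hC : C ⊆ A + B) : u⁻¹ • x ∈ polarSet C := fun c hc => by
    rw [real_inner_smul_left, inv_mul_le_iff₀ hu₀, mul_one]
    exact (hf c (hC hc)).le
  have := hy _ ⟨mem_polarSet fun a ha => ⟨a, ha, 0, hB₀, add_zero a⟩,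
    mem_polarSet fun b hb => ⟨0, hA₀, b, hb, zero_add b⟩⟩
  rw [real_inner_smul_right, inv_mul_le_iff₀ hu₀, real_inner_comm] at this
  linarith

theorem polarSet_polarSet [CompleteSpace X] (hA : IsClosed A) (hA_conv : Convex ℝ A)
    (hA₀ : 0 ∈ A) : polarSet (polarSet A) = A := by
  refine Subset.antisymm ?_ fun x hx y hy => (real_inner_comm y x).trans_le (hy x hx)
  have h_univ : polarSet ({0} : Set X) = univ := by
    ext
    simp [polarSet]
  simpa [h_univ] using polarSet_inter_polarSet_subset_add isCompact_singleton
    (convex_singleton 0) (mem_singleton (0 : X)) hA hA_conv hA₀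

theorem polarSet_inter_subset_add [FiniteDimensional ℝ X] (hA : IsClosed A)
    (hA_conv : Convex ℝ A) (hA₀ : 0 ∈ interior A) (hB : IsClosed B) (hB_conv : Convex ℝ B)
    (hB₀ : 0 ∈ B) : polarSet (A ∩ B) ⊆ polarSet A + polarSet B := by
  have := polarSet_inter_polarSet_subset_add (isCompact_polarSet hA₀) (convex_polarSet A)
    (zero_mem_polarSet A) (isClosed_polarSet B) (convex_polarSet B) (zero_mem_polarSet B)
  rwa [polarSet_polarSet hA hA_conv (interior_subset hA₀), polarSet_polarSet hB hB_conv hB₀] at this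

theorem inter_polarSet_subset_closedBall (A : Set X) : A ∩ polarSet A ⊆ closedBall 0 1 := by
  rintro x ⟨hx, hx'⟩
  have := hx' x hx
  rw [real_inner_self_eq_norm_sq] at this
  exact mem_closedBall_zero_iff.2 ((sq_le_one_iff₀ (norm_nonneg x)).1 this)

theorem add_polarSet_subset_two_smul (A : Set X) :
    A + polarSet A ⊆ (2 : ℝ) • polarSet (A ∩ polarSet A) := by
  rintro _ ⟨a, ha, b, hb, rfl⟩
  rw [mem_smul_set_iff_inv_smul_mem₀ two_ne_zero]
  intro y hy
  rw [real_inner_smul_left, inner_add_left, real_inner_comm]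
  linarith [hy.2 a ha, hb y hy.1]

end PolarSet

section SymmBody

/-- A convex body that is symmetric about the origin. -/
structure IsSymmBody {X : Type*} [NormedAddCommGroup X] [NormedSpace ℝ X] (A : Set X) : Prop where
  isCompact : IsCompact A
  convex : Convex ℝ A
  neg_eq : -A = A
  zero_mem_interior : 0 ∈ interior A

variable {X : Type*} [NormedAddCommGroup X] [NormedSpace ℝ X] {A B : Set X}

theorem IsSymmBody.zero_mem (hA : IsSymmBody A) : 0 ∈ A := interior_subset hA.zero_mem_interior

theorem IsSymmBody.inter (hA : IsSymmBody A) (hB : IsSymmBody B) : IsSymmBody (A ∩ B) where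
  isCompact := hA.isCompact.inter hB.isCompact
  convex := hA.convex.inter hB.convex
  neg_eq := by rw [inter_neg, hA.neg_eq, hB.neg_eq]
  zero_mem_interior := by
    rw [interior_inter]
    exact ⟨hA.zero_mem_interior, hB.zero_mem_interior⟩

theorem IsSymmBody.smul (hA : IsSymmBody A) {s : ℝ} (hs : s ≠ 0) : IsSymmBody (s • A) where
  isCompact := hA.isCompact.smul s
  convex := hA.convex.smul s
  neg_eq := by rw [← smul_set_neg, hA.neg_eq]
  zero_mem_interior := by
    rw [interior_smul₀ hs]
    exact ⟨0, hA.zero_mem_interior, smul_zero s⟩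

theorem IsSymmBody.image [CompleteSpace X] {Y : Type*} [NormedAddCommGroup Y] [NormedSpace ℝ Y]
    [CompleteSpace Y] (hA : IsSymmBody A) {f : X →L[ℝ] Y} (hf : Function.Surjective f) :
    IsSymmBody (f '' A) where
  isCompact := hA.isCompact.image f.continuous
  convex := hA.convex.linear_image f.toLinearMap
  neg_eq := by rw [← image_neg_of_apply_neg_eq_neg fun x _ => map_neg f x, hA.neg_eq]
  zero_mem_interior := (f.isOpenMap hf).image_interior_subset A
    ⟨0, hA.zero_mem_interior, map_zero f⟩

theorem IsSymmBody.polar {X : Type*} [NormedAddCommGroup X] [InnerProductSpace ℝ X]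
    [FiniteDimensional ℝ X] {A : Set X} (hA : IsSymmBody A) : IsSymmBody (polarSet A) where
  isCompact := isCompact_polarSet hA.zero_mem_interior
  convex := convex_polarSet A
  neg_eq := by rw [← polarSet_neg, hA.neg_eq]
  zero_mem_interior := zero_mem_interior_polarSet hA.isCompact.isBounded

end SymmBody

section Sandwich

/-- The set `A` lies between the closed balls of radii `r⁻¹` and `r` about the origin. -/
structure IsSandwiched {X : Type*} [NormedAddCommGroup X] (A : Set X) (r : ℝ) : Prop where
  closedBall_subset : closedBall 0 r⁻¹ ⊆ A
  subset_closedBall : A ⊆ closedBall 0 r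

theorem IsSandwiched.mono {X : Type*} [NormedAddCommGroup X] {A : Set X} {r s : ℝ}
    (h : IsSandwiched A r) (hr : 0 < r) (hrs : r ≤ s) : IsSandwiched A s where
  closedBall_subset := (closedBall_subset_closedBall (inv_anti₀ hr hrs)).trans h.closedBall_subset
  subset_closedBall := h.subset_closedBall.trans (closedBall_subset_closedBall hrs)

variable {X : Type*} [NormedAddCommGroup X] [InnerProductSpace ℝ X] {A : Set X} {r : ℝ}

theorem IsSandwiched.polar (h : IsSandwiched A r) (hr : 0 < r) : IsSandwiched (polarSet A) r where
  closedBall_subset := closedBall_subset_polarSet h.subset_closedBall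
  subset_closedBall := by
    simpa using polarSet_subset_closedBall (inv_pos.2 hr) h.closedBall_subset

-- `A ∩ A°` always lies in the unit ball, so one step replaces the radius by its square root.
theorem IsSandwiched.smul_inter_polar (h : IsSandwiched A (r ^ 2)) (hr : 0 < r) :
    IsSandwiched (r • (A ∩ polarSet A)) r where
  closedBall_subset := by
    have h_radius : r⁻¹ = ‖r‖ * (r ^ 2)⁻¹ := by
      rw [Real.norm_of_nonneg hr.le]
      field_simp
    rw [h_radius, ← smul_zero r, ← smul_closedBall r (0 : X) (by positivity)]
    exact smul_set_mono
      (subset_inter h.closedBall_subset (h.polar (by positivity)).closedBall_subset)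
  subset_closedBall := by
    rw [← smul_unitClosedBall_of_nonneg hr.le]
    exact smul_set_mono (inter_polarSet_subset_closedBall A)

end Sandwich

section VolumeProduct

theorem det_adjoint {X : Type*} [NormedAddCommGroup X] [InnerProductSpace ℝ X]
    [FiniteDimensional ℝ X] (f : X →ₗ[ℝ] X) : LinearMap.det f.adjoint = LinearMap.det f := by
  let b := stdOrthonormalBasis ℝ X
  rw [← LinearMap.det_toMatrix b.toBasis, ← LinearMap.det_toMatrix b.toBasis f,
    LinearMap.toMatrix_adjoint, Matrix.det_conjTranspose, star_trivial]

variable {X : Type*} [NormedAddCommGroup X] [InnerProductSpace ℝ X] [MeasurableSpace X]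

/-- The volume product (Mahler volume) of `A`. -/
def volumeProduct (μ : Measure X) (A : Set X) : ℝ≥0∞ := μ A * μ (polarSet A)

variable [BorelSpace X] [FiniteDimensional ℝ X] (μ : Measure X) [μ.IsAddHaarMeasure] {A D : Set X}

theorem volumeProduct_smul (A : Set X) {s : ℝ} (hs : 0 < s) :
    volumeProduct μ (s • A) = volumeProduct μ A := by
  rw [volumeProduct, polarSet_smul A hs, Measure.addHaar_smul, Measure.addHaar_smul,
    mul_mul_mul_comm, ← ENNReal.ofReal_mul (abs_nonneg _), ← abs_mul, ← mul_pow,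
    mul_inv_cancel₀ hs.ne', one_pow, abs_one, ENNReal.ofReal_one, one_mul, volumeProduct]

theorem volumeProduct_le_inter_polarSet (hA : IsSymmBody A) :
    volumeProduct μ A ≤ 2 ^ Module.finrank ℝ X * volumeProduct μ (A ∩ polarSet A) :=
  calc μ A * μ (polarSet A)
      ≤ μ (A ∩ polarSet A) * μ (A + polarSet A) :=
        measure_mul_measure_le_of_neg_eq μ hA.isCompact hA.convex hA.neg_eq hA.polar.isCompact
          hA.polar.convex hA.polar.neg_eq
    _ ≤ μ (A ∩ polarSet A) * μ ((2 : ℝ) • polarSet (A ∩ polarSet A)) := by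
        gcongr
        exact add_polarSet_subset_two_smul A
    _ = 2 ^ Module.finrank ℝ X * volumeProduct μ (A ∩ polarSet A) := by
        rw [Measure.addHaar_smul_of_nonneg _ zero_le_two, ENNReal.ofReal_pow zero_le_two,
          ENNReal.ofReal_ofNat, volumeProduct]
        ring

theorem volumeProduct_inter_polarSet_le (hA : IsSymmBody A) :
    volumeProduct μ (A ∩ polarSet A) ≤ 4 ^ Module.finrank ℝ X * volumeProduct μ A := by
  have h_polar : polarSet (A ∩ polarSet A) ⊆ A + polarSet A := by
    have := polarSet_inter_subset_add hA.isCompact.isClosed hA.convex hA.zero_mem_interior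
      hA.polar.isCompact.isClosed hA.polar.convex hA.polar.zero_mem
    rwa [polarSet_polarSet hA.isCompact.isClosed hA.convex hA.zero_mem, add_comm] at this
  have h_add := measure_inter_neg_mul_measure_add_le μ hA.isCompact hA.convex
    hA.polar.isCompact hA.polar.convex
  rw [hA.polar.neg_eq] at h_add
  exact (mul_le_mul_right (measure_mono h_polar) _).trans h_add

theorem measure_closedBall_two_mul (r : ℝ) (hr : 0 ≤ r) :
    μ (closedBall 0 (2 * r)) = 2 ^ Module.finrank ℝ X * μ (closedBall 0 r) := by
  rw [Measure.addHaar_closedBall_mul μ 0 zero_le_two hr, ENNReal.ofReal_pow zero_le_two,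
    ENNReal.ofReal_ofNat]

theorem IsSandwiched.measure_le (h : IsSandwiched A 2) :
    μ A ≤ 2 ^ Module.finrank ℝ X * μ (closedBall 0 1) := by
  rw [← measure_closedBall_two_mul μ 1 zero_le_one, mul_one]
  exact measure_mono h.subset_closedBall

theorem IsSandwiched.measure_closedBall_le (h : IsSandwiched A 2) :
    μ (closedBall 0 1) ≤ 2 ^ Module.finrank ℝ X * μ A := by
  rw [← mul_inv_cancel₀ (two_ne_zero (α := ℝ)), measure_closedBall_two_mul μ _ (by norm_num)]
  exact mul_le_mul_right (measure_mono h.closedBall_subset) _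

theorem IsSandwiched.volumeProduct_le {j : ℕ} (h : IsSandwiched A (2 ^ 2 ^ j))
    (hA : IsSymmBody A) : volumeProduct μ A ≤
      (4 * 2 ^ j) ^ Module.finrank ℝ X * μ (closedBall 0 1) ^ 2 := by
  induction j generalizing A with
  | zero =>
    rw [pow_zero, pow_one] at h
    calc μ A * μ (polarSet A)
        ≤ (2 ^ Module.finrank ℝ X * μ (closedBall 0 1)) *
            (2 ^ Module.finrank ℝ X * μ (closedBall 0 1)) :=
          mul_le_mul' (h.measure_le μ) ((h.polar two_pos).measure_le μ)
      _ = (4 * 2 ^ 0) ^ Module.finrank ℝ X * μ (closedBall 0 1) ^ 2 := by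
          rw [mul_mul_mul_comm, ← mul_pow, sq]
          norm_num
  | succ j ih =>
    rw [pow_succ, pow_mul] at h
    have h_inter := ih (h.smul_inter_polar (by positivity))
      ((hA.inter hA.polar).smul (by positivity))
    rw [volumeProduct_smul μ _ (by positivity)] at h_inter
    refine (volumeProduct_le_inter_polarSet μ hA).trans ((mul_le_mul_right h_inter _).trans_eq ?_)
    rw [← mul_assoc, ← mul_pow]
    ring

theorem IsSandwiched.sq_measure_closedBall_le {j : ℕ} (h : IsSandwiched A (2 ^ 2 ^ j))
    (hA : IsSymmBody A) : μ (closedBall 0 1) ^ 2 ≤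
      (4 * 4 ^ j) ^ Module.finrank ℝ X * volumeProduct μ A := by
  induction j generalizing A with
  | zero =>
    rw [pow_zero, pow_one] at h
    calc μ (closedBall 0 1) ^ 2
        ≤ (2 ^ Module.finrank ℝ X * μ A) * (2 ^ Module.finrank ℝ X * μ (polarSet A)) := by
          rw [sq]
          exact mul_le_mul' (h.measure_closedBall_le μ)
            ((h.polar two_pos).measure_closedBall_le μ)
      _ = (4 * 4 ^ 0) ^ Module.finrank ℝ X * volumeProduct μ A := by
          rw [mul_mul_mul_comm, ← mul_pow, volumeProduct]
          norm_num
  | succ j ih =>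
    rw [pow_succ, pow_mul] at h
    have h_inter := ih (h.smul_inter_polar (by positivity))
      ((hA.inter hA.polar).smul (by positivity))
    rw [volumeProduct_smul μ _ (by positivity)] at h_inter
    refine h_inter.trans ((mul_le_mul_right (volumeProduct_inter_polarSet_le μ hA) _).trans_eq ?_)
    rw [← mul_assoc, ← mul_pow]
    ring

theorem volumeProduct_image (T : X ≃ₗ[ℝ] X) (A : Set X) :
    volumeProduct μ (T '' A) = volumeProduct μ A := by
  have h_det : LinearMap.det (T : X →ₗ[ℝ] X) ≠ 0 := T.isUnit_det'.ne_zero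
  have h_polar : polarSet (T '' A) = LinearMap.adjoint (T : X →ₗ[ℝ] X) ⁻¹' polarSet A := by
    ext x
    simp [polarSet, LinearMap.adjoint_inner_left]
  have h_image : μ (T '' A) = ENNReal.ofReal |LinearMap.det (T : X →ₗ[ℝ] X)| * μ A :=
    Measure.addHaar_image_linearMap μ (T : X →ₗ[ℝ] X) A
  rw [volumeProduct, h_polar, Measure.addHaar_preimage_linearMap μ (by rwa [det_adjoint]),
    det_adjoint, h_image, mul_mul_mul_comm, ← ENNReal.ofReal_mul (abs_nonneg _), ← abs_mul,
    mul_inv_cancel₀ h_det, abs_one, ENNReal.ofReal_one, one_mul, volumeProduct]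

end VolumeProduct

section Auerbach

theorem exists_det_maximal {X ι : Type*} [NormedAddCommGroup X] [NormedSpace ℝ X] [Fintype ι]
    [DecidableEq ι] (b : Module.Basis ι ℝ X) {A : Set X} (hA : IsCompact A)
    (h0 : (0 : X) ∈ interior A) :
    ∃ x : ι → X, (∀ i, x i ∈ A) ∧ b.det x ≠ 0 ∧
      ∀ z : ι → X, (∀ i, z i ∈ A) → |b.det z| ≤ |b.det x| := by
  have := Module.Basis.finiteDimensional_of_finite b
  have h_cont : Continuous fun x : ι → X => |b.det x| := by
    have : Continuous fun x : ι → X => b.toMatrix x := continuous_matrix fun i j =>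
      (b.coord i).continuous_of_finiteDimensional.comp (continuous_apply j)
    simp only [Module.Basis.det_apply]
    exact this.matrix_det.abs
  obtain ⟨x, hx, hx_max⟩ := (isCompact_univ_pi fun _ : ι => hA).exists_isMaxOn
    ⟨0, fun _ _ => interior_subset h0⟩ h_cont.continuousOn
  have h_small : ∀ᶠ t : ℝ in nhds 0, ∀ i, t • b i ∈ A := Filter.eventually_all.2 fun i =>
    (by fun_prop : Continuous fun t : ℝ => t • b i).continuousAt.eventually_mem
      (by simpa using mem_interior_iff_mem_nhds.1 h0)
  obtain ⟨t, ht_mem, ht_pos⟩ := ((h_small.filter_mono nhdsWithin_le_nhds).and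
    (self_mem_nhdsWithin (s := Ioi (0 : ℝ)))).exists
  have h_pos : 0 < |b.det fun i => t • b i| := by
    rw [b.det.map_smul_univ (fun _ => t) b, b.det_self, smul_eq_mul, mul_one, Finset.prod_const]
    exact abs_pos.2 (pow_pos ht_pos _).ne'
  exact ⟨x, fun i => hx i (mem_univ i),
    abs_pos.1 (h_pos.trans_le (hx_max fun i _ => ht_mem i)), fun z hz => hx_max fun i _ => hz i⟩

-- By Cramer's rule the coordinates of `y` in a determinant-maximal basis are quotients of
-- determinants by the maximal one.
theorem exists_auerbach_basis {X ι : Type*} [NormedAddCommGroup X] [NormedSpace ℝ X] [Finite ι]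
    (b : Module.Basis ι ℝ X) {A : Set X} (hA : IsCompact A) (h0 : (0 : X) ∈ interior A) :
    ∃ e : Module.Basis ι ℝ X, (∀ i, e i ∈ A) ∧ ∀ y ∈ A, ∀ i, |e.repr y i| ≤ 1 := by
  classical
  have := Fintype.ofFinite ι
  obtain ⟨x, hx, hx_det, hx_max⟩ := exists_det_maximal b hA h0
  obtain ⟨h_indep, h_span⟩ := b.is_basis_iff_det.2 hx_det.isUnit
  refine ⟨.mk h_indep h_span.ge, fun i => by simpa using hx i, fun y hy i => ?_⟩
  have cramer : b.det x * (Module.Basis.mk h_indep h_span.ge).repr y i =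
      b.det (Function.update x i y) :=
    LinearMap.congr_fun (b.det_smul_mk_coord_eq_det_update h_indep h_span.ge i) y
  have h_update : ∀ j, Function.update x i y j ∈ A := fun j => by
    rcases eq_or_ne j i with rfl | hj
    · simpa using hy
    · simpa [hj] using hx j
  refine le_of_mul_le_mul_left ?_ (abs_pos.2 hx_det)
  rw [← abs_mul, cramer, mul_one]
  exact hx_max _ h_update

theorem IsSymmBody.sum_smul_mem {X ι : Type*} [NormedAddCommGroup X] [NormedSpace ℝ X] [Fintype ι]
    [Nonempty ι] {A : Set X} (hA : IsSymmBody A) {e : ι → X} (he : ∀ i, e i ∈ A) {c : ι → ℝ}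
    (hc : ∀ i, |c i| ≤ (Fintype.card ι : ℝ)⁻¹) : ∑ i, c i • e i ∈ A := by
  have h_card : (0 : ℝ) < Fintype.card ι := by exact_mod_cast Fintype.card_pos
  have h_balanced : Balanced ℝ A := (balanced_iff_neg_mem hA.convex).2 fun x hx => by
    rwa [← hA.neg_eq, neg_mem_neg]
  have h_mem (i : ι) : ((Fintype.card ι : ℝ) * c i) • e i ∈ A := by
    refine h_balanced.smul_mem ?_ (he i)
    rw [Real.norm_eq_abs, abs_mul, abs_of_pos h_card, ← mul_inv_cancel₀ h_card.ne']
    exact mul_le_mul_of_nonneg_left (hc i) h_card.le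
  have := hA.convex.sum_mem (t := Finset.univ) (w := fun _ => (Fintype.card ι : ℝ)⁻¹)
    (fun _ _ => by positivity) (by simp [h_card.ne']) fun i _ => h_mem i
  simpa only [smul_smul, inv_mul_cancel_left₀ h_card.ne'] using this

variable {X : Type*} [NormedAddCommGroup X] [InnerProductSpace ℝ X] [FiniteDimensional ℝ X]
  {A D : Set X}

theorem IsSymmBody.exists_isSandwiched_image [Nontrivial X] (hA : IsSymmBody A) :
    ∃ T : X ≃ₗ[ℝ] X, IsSandwiched (T '' A) (Module.finrank ℝ X) := by
  let o := stdOrthonormalBasis ℝ X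
  obtain ⟨e, he_mem, he_le⟩ := exists_auerbach_basis o.toBasis hA.isCompact hA.zero_mem_interior
  have : Nonempty (Fin (Module.finrank ℝ X)) := ⟨⟨0, Module.finrank_pos⟩⟩
  refine ⟨e.equiv o.toBasis (Equiv.refl _), fun z hz => ?_, ?_⟩
  · refine ⟨∑ i, o.repr z i • e i, hA.sum_smul_mem he_mem fun i => ?_, ?_⟩
    · rw [Fintype.card_fin, o.repr_apply_apply]
      exact (abs_real_inner_le_norm _ _).trans (by simpa using hz)
    · simpa using o.sum_repr z
  · rintro _ ⟨y, hy, rfl⟩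
    have h_apply : e.equiv o.toBasis (Equiv.refl _) y = ∑ i, e.repr y i • o i := by
      conv_lhs => rw [← e.sum_repr y, map_sum]
      simp only [map_smul, Module.Basis.equiv_apply, Equiv.refl_apply, OrthonormalBasis.coe_toBasis]
    rw [mem_closedBall_zero_iff, h_apply]
    calc ‖∑ i, e.repr y i • o i‖ ≤ ∑ i, ‖e.repr y i • o i‖ := norm_sum_le _ _
      _ ≤ ∑ _i : Fin (Module.finrank ℝ X), (1 : ℝ) := Finset.sum_le_sum fun i _ => by
          rw [norm_smul, o.norm_eq_one, mul_one]
          exact he_le y hy i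
      _ = Module.finrank ℝ X := by simp

variable [Nontrivial X] [MeasurableSpace X] [BorelSpace X] (μ : Measure X) [μ.IsAddHaarMeasure]
  {j : ℕ}

theorem IsSymmBody.volumeProduct_le_mul (hA : IsSymmBody A) (hD : IsSymmBody D)
    (hj : (Module.finrank ℝ X : ℝ) ≤ 2 ^ 2 ^ j) :
    volumeProduct μ D ≤ (16 * 8 ^ j) ^ Module.finrank ℝ X * volumeProduct μ A := by
  have exists_position {B : Set X} (hB : IsSymmBody B) : ∃ T : X ≃ₗ[ℝ] X,
      IsSymmBody (T '' B) ∧ IsSandwiched (T '' B) (2 ^ 2 ^ j) := by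
    obtain ⟨T, hT⟩ := hB.exists_isSandwiched_image
    exact ⟨T, hB.image (f := T.toContinuousLinearEquiv.toContinuousLinearMap) T.surjective,
      hT.mono (Nat.cast_pos.2 Module.finrank_pos) hj⟩
  obtain ⟨T, hT_symm, hT⟩ := exists_position hA
  obtain ⟨S, hS_symm, hS⟩ := exists_position hD
  have hA_le := hT.sq_measure_closedBall_le μ hT_symm
  have hD_le := hS.volumeProduct_le μ hS_symm
  rw [volumeProduct_image] at hA_le hD_le
  refine hD_le.trans ((mul_le_mul_right hA_le _).trans_eq ?_)
  rw [← mul_assoc, ← mul_pow, show (8 : ℝ≥0∞) = 2 * 4 by norm_num, mul_pow 2 4]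
  ring

theorem IsSymmBody.measure_le_of_measure_polarSet_le (hA : IsSymmBody A) (hD : IsSymmBody D)
    (hj : (Module.finrank ℝ X : ℝ) ≤ 2 ^ 2 ^ j) {G : ℝ≥0∞}
    (hG : μ (polarSet A) ≤ G * μ (polarSet D)) :
    μ D ≤ (16 * 8 ^ j) ^ Module.finrank ℝ X * G * μ A := by
  have h_pos : μ (polarSet D) ≠ 0 :=
    (μ.measure_pos_of_nonempty_interior ⟨0, hD.polar.zero_mem_interior⟩).ne'
  refine (ENNReal.mul_le_mul_iff_left h_pos hD.polar.isCompact.measure_lt_top.ne).1 ?_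
  calc μ D * μ (polarSet D)
      ≤ (16 * 8 ^ j) ^ Module.finrank ℝ X * (μ A * μ (polarSet A)) :=
        hA.volumeProduct_le_mul μ hD hj
    _ ≤ (16 * 8 ^ j) ^ Module.finrank ℝ X * (μ A * (G * μ (polarSet D))) := by gcongr
    _ = (16 * 8 ^ j) ^ Module.finrank ℝ X * G * μ A * μ (polarSet D) := by ring

end Auerbach

end Polar

section Regularization

variable {V : Type*} [NormedAddCommGroup V] [NormedSpace ℝ V] {A B K : Set V}

theorem isCompact_convexHull_union (hA : IsCompact A) (hA_conv : Convex ℝ A)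
    (hA_ne : A.Nonempty) (hB : IsCompact B) (hB_conv : Convex ℝ B) (hB_ne : B.Nonempty) :
    IsCompact (convexHull ℝ (A ∪ B)) := by
  have h_image : convexHull ℝ (A ∪ B) =
      (fun p : (V × V) × ℝ => (1 - p.2) • p.1.1 + p.2 • p.1.2) ''
        ((A ×ˢ B) ×ˢ Icc (0 : ℝ) 1) := by
    rw [hA_conv.convexHull_union hB_conv hA_ne hB_ne]
    ext x
    simp only [mem_convexJoin, segment_eq_image]
    constructor
    · rintro ⟨a, ha, b, hb, t, ht, rfl⟩
      exact ⟨((a, b), t), ⟨⟨ha, hb⟩, ht⟩, rfl⟩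
    · rintro ⟨⟨⟨a, b⟩, t⟩, ⟨⟨ha, hb⟩, ht⟩, rfl⟩
      exact ⟨a, ha, b, hb, t, ht, rfl⟩
  rw [h_image]
  exact ((hA.prod hB).prod isCompact_Icc).image (by fun_prop)

theorem isSymmBody_inter_neg (hK : IsCompact K) (hK_conv : Convex ℝ K) (h0 : 0 ∈ interior K) :
    IsSymmBody (K ∩ -K) where
  isCompact := hK.inter hK.neg
  convex := hK_conv.inter hK_conv.neg
  neg_eq := by rw [inter_neg, neg_neg, inter_comm]
  zero_mem_interior := by
    rw [mem_interior_iff_mem_nhds] at h0 ⊢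
    exact Filter.inter_mem h0 (neg_mem_nhds_zero _ h0)

theorem isSymmBody_convexHull_union_neg (hK : IsCompact K) (hK_conv : Convex ℝ K)
    (h0 : 0 ∈ interior K) : IsSymmBody (convexHull ℝ (K ∪ -K)) where
  isCompact := isCompact_convexHull_union hK hK_conv ⟨0, interior_subset h0⟩ hK.neg hK_conv.neg
    (Nonempty.neg ⟨0, interior_subset h0⟩)
  convex := convex_convexHull ℝ _
  neg_eq := by rw [← convexHull_neg, union_neg, neg_neg, union_comm]
  zero_mem_interior :=
    interior_mono (subset_union_left.trans (subset_convexHull ℝ (K ∪ -K))) h0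

theorem convexHull_union_neg_subset_sub_self {V : Type*} [AddCommGroup V] [Module ℝ V]
    {K : Set V} (hK_conv : Convex ℝ K) (h0 : 0 ∈ K) : convexHull ℝ (K ∪ -K) ⊆ K - K := by
  refine convexHull_min (union_subset (fun x hx => ⟨x, hx, 0, h0, sub_zero x⟩) fun x hx => ?_)
    (hK_conv.sub hK_conv)
  exact ⟨0, h0, -x, hx, by simp⟩

end Regularization

section Transfer

theorem setIntegral_preimage_eq_zero {P V : Type*} [NormedAddCommGroup P] [NormedSpace ℝ P]
    [FiniteDimensional ℝ P] [MeasurableSpace P] [BorelSpace P] [NormedAddCommGroup V]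
    [NormedSpace ℝ V] [MeasurableSpace V] [BorelSpace V] (ρ : Measure P) [ρ.IsAddHaarMeasure]
    (τ : Measure V) [τ.IsAddHaarMeasure] (φ : P ≃L[ℝ] V) {K : Set V}
    (hK_bar : ∫ x in K, x ∂τ = 0) : ∫ p in φ ⁻¹' K, p ∂ρ = 0 := by
  have : FiniteDimensional ℝ V := φ.toLinearEquiv.finiteDimensional
  have : (ρ.map φ).IsAddHaarMeasure := φ.isAddHaarMeasure_map ρ
  have h_map : ∫ x in K, x ∂ρ.map φ = 0 := by
    rw [Measure.isAddLeftInvariant_eq_smul (ρ.map φ) τ, Measure.restrict_smul,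
      integral_smul_nnreal_measure, hK_bar, smul_zero]
  have h_emb : MeasurableEmbedding φ := φ.toHomeomorph.measurableEmbedding
  rw [h_emb.setIntegral_map] at h_map
  rw [← map_eq_zero_iff φ φ.injective, ← h_map]
  exact (φ.integral_comp_comm fun p => p).symm

theorem zero_mem_interior_preimage {P V : Type*} [NormedAddCommGroup P] [NormedSpace ℝ P]
    [NormedAddCommGroup V] [NormedSpace ℝ V] (φ : P ≃L[ℝ] V) {K : Set V}
    (h0 : 0 ∈ interior K) : 0 ∈ interior (φ ⁻¹' K) :=
  preimage_interior_subset_interior_preimage φ.continuous (by simpa using h0)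

variable {V : Type*} [NormedAddCommGroup V] [InnerProductSpace ℝ V] [FiniteDimensional ℝ V]
  (H : Submodule ℝ V)

/-- The splitting of `V` as the sum of `H` and its orthogonal complement. -/
def orthogonalSplitting : (H × Hᗮ) ≃L[ℝ] V :=
  (H.prodEquivOfIsCompl Hᗮ H.isCompl_orthogonal).toContinuousLinearEquiv

theorem orthogonalSplitting_apply (p : H × Hᗮ) : orthogonalSplitting H p = p.1 + p.2 := by
  simp [orthogonalSplitting]

theorem fst_image_preimage_orthogonalSplitting (S : Set V) :
    Prod.fst '' (orthogonalSplitting H ⁻¹' S) = H.orthogonalProjectionOnto '' S := by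
  have h_proj (p : H × Hᗮ) : H.orthogonalProjectionOnto (orthogonalSplitting H p) = p.1 := by
    simp [orthogonalSplitting_apply]
  rw [← (orthogonalSplitting H).surjective.image_preimage S, preimage_image_eq _
    (orthogonalSplitting H).injective, image_image]
  simp only [h_proj]

theorem polarSet_image_orthogonalProjectionOnto (S : Set V) :
    polarSet (H.orthogonalProjectionOnto '' S) = (↑) ⁻¹' polarSet S := by
  ext h
  simp only [polarSet, mem_ofPred_eq, forall_mem_image, mem_preimage,
    Submodule.inner_orthogonalProjectionOnto_eq_of_mem_left]

variable [MeasurableSpace V] [BorelSpace V] (τ : Measure V) [τ.IsAddHaarMeasure] (μ : Measure H)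
  [μ.IsAddHaarMeasure] {K L : Set V}

theorem measure_orthogonalProjectionOnto_le_of_barycenter_eq_zero (hK : IsCompact K)
    (hK_conv : Convex ℝ K) (h0 : 0 ∈ interior K) (hK_bar : ∫ x in K, x ∂τ = 0) :
    μ (H.orthogonalProjectionOnto '' K) ≤
      (2 * rsFactor (Module.finrank ℝ V) (Module.finrank ℝ H)) ^ Module.finrank ℝ H *
        μ (H.orthogonalProjectionOnto '' (K ∩ -K)) := by
  let φ := orthogonalSplitting H
  have h_compact : IsCompact (φ ⁻¹' K) := φ.toHomeomorph.isCompact_preimage.2 hK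
  have h_le := measure_fst_le_of_barycenter_eq_zero μ (Measure.addHaar : Measure Hᗮ)
    h_compact (hK_conv.linear_preimage φ.toLinearMap)
    (zero_mem_interior_preimage φ h0) (setIntegral_preimage_eq_zero _ τ φ hK_bar)
  have h_inter : φ ⁻¹' K ∩ -(φ ⁻¹' K) = φ ⁻¹' (K ∩ -K) := by
    ext
    simp
  rwa [φ.toLinearEquiv.finrank_eq, h_inter, fst_image_preimage_orthogonalSplitting,
    fst_image_preimage_orthogonalSplitting] at h_le

theorem measure_coe_preimage_sub_self_le_of_barycenter_eq_zero (hL : IsCompact L)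
    (hL_conv : Convex ℝ L) (h0 : 0 ∈ interior L) (hL_bar : ∫ x in L, x ∂τ = 0) :
    μ ((↑) ⁻¹' (L - L)) ≤
      (8 * rsFactor (Module.finrank ℝ V) (Module.finrank ℝ H)) ^ Module.finrank ℝ H *
        μ ((↑) ⁻¹' (L ∩ -L)) := by
  let ψ := (ContinuousLinearEquiv.prodComm ℝ Hᗮ H).trans (orthogonalSplitting H)
  have h_compact : IsCompact (ψ ⁻¹' L) := ψ.toHomeomorph.isCompact_preimage.2 hL
  have h_le := measure_section_sub_self_le_of_barycenter_eq_zero μ (Measure.addHaar : Measure Hᗮ)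
    h_compact (hL_conv.linear_preimage ψ.toLinearMap)
    (zero_mem_interior_preimage ψ h0) (setIntegral_preimage_eq_zero _ τ ψ hL_bar)
  have h_coe : ψ ∘ Prod.mk 0 = ((↑) : H → V) := by
    ext h
    simp [ψ, orthogonalSplitting_apply]
  have h_inter : ψ ⁻¹' L ∩ -(ψ ⁻¹' L) = ψ ⁻¹' (L ∩ -L) := by
    ext
    simp
  have h_sub : ψ ⁻¹' L - ψ ⁻¹' L = ψ ⁻¹' (L - L) := by
    simp only [← ψ.image_symm_eq_preimage, image_sub ψ.symm]
  rwa [(orthogonalSplitting H).toLinearEquiv.finrank_eq, h_inter, h_sub, ← preimage_comp,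
    ← preimage_comp, h_coe] at h_le

theorem measure_orthogonalProjectionOnto_convexHull_le (hK : IsCompact K) (hK_conv : Convex ℝ K)
    (h0 : 0 ∈ K) : μ (H.orthogonalProjectionOnto '' convexHull ℝ (K ∪ -K)) ≤
      4 ^ Module.finrank ℝ H * μ (H.orthogonalProjectionOnto '' K) := by
  refine (measure_mono (image_mono (convexHull_union_neg_subset_sub_self hK_conv h0))).trans ?_
  rw [image_sub H.orthogonalProjectionOnto]
  exact measure_sub_self_le μ (hK.image H.orthogonalProjectionOnto.continuous)
    (hK_conv.linear_image H.orthogonalProjectionOnto.toLinearMap)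

theorem measure_projection_convexHull_le_of_barycenter_eq_zero (hK : IsCompact K)
    (hK_conv : Convex ℝ K) (h0 : 0 ∈ interior K) (hK_bar : ∫ x in K, x ∂τ = 0) :
    μ (H.orthogonalProjectionOnto '' convexHull ℝ (K ∪ -K)) ≤
      (8 * rsFactor (Module.finrank ℝ V) (Module.finrank ℝ H)) ^ Module.finrank ℝ H *
        μ (H.orthogonalProjectionOnto '' (K ∩ -K)) := by
  refine (measure_orthogonalProjectionOnto_convexHull_le H μ hK hK_conv
    (interior_subset h0)).trans ((mul_le_mul_right
      (measure_orthogonalProjectionOnto_le_of_barycenter_eq_zero H τ μ hK hK_conv h0 hK_bar)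
      _).trans_eq ?_)
  rw [← mul_assoc, ← mul_pow, ← mul_assoc, show (4 * 2 : ℝ≥0∞) = 8 by norm_num]

theorem measure_projection_convexHull_le_of_polar_barycenter_eq_zero [Nontrivial H]
    (hK : IsCompact K) (hK_conv : Convex ℝ K) (h0 : 0 ∈ interior K)
    (hK_bar : ∫ x in polarSet K, x ∂τ = 0) {j : ℕ} (hj : (Module.finrank ℝ H : ℝ) ≤ 2 ^ 2 ^ j) :
    μ (H.orthogonalProjectionOnto '' convexHull ℝ (K ∪ -K)) ≤
      (8 * rsFactor (Module.finrank ℝ V) (Module.finrank ℝ H) * (16 * 8 ^ j)) ^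
        Module.finrank ℝ H * μ (H.orthogonalProjectionOnto '' (K ∩ -K)) := by
  have h_surj : Function.Surjective H.orthogonalProjectionOnto := fun h => ⟨h, by simp⟩
  have h_polar_in : polarSet (K ∩ -K) ⊆ polarSet K - polarSet K := by
    have := polarSet_inter_subset_add hK.isClosed hK_conv h0 hK.neg.isClosed hK_conv.neg
      (by simpa using interior_subset h0)
    rwa [polarSet_neg, ← sub_eq_add_neg] at this
  have h_polar_out : polarSet (convexHull ℝ (K ∪ -K)) = polarSet K ∩ -polarSet K := by
    rw [polarSet_convexHull, polarSet_union, polarSet_neg]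
  have h_section := measure_coe_preimage_sub_self_le_of_barycenter_eq_zero H τ μ
    (isCompact_polarSet h0) (convex_polarSet K) (zero_mem_interior_polarSet hK.isBounded) hK_bar
  rw [← h_polar_out, ← polarSet_image_orthogonalProjectionOnto] at h_section
  have h_polar := (measure_mono (μ := μ) (preimage_mono h_polar_in)).trans h_section
  rw [← polarSet_image_orthogonalProjectionOnto] at h_polar
  refine (((isSymmBody_inter_neg hK hK_conv h0).image h_surj).measure_le_of_measure_polarSet_le μ
    ((isSymmBody_convexHull_union_neg hK hK_conv h0).image h_surj) hj h_polar).trans_eq ?_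
  rw [← mul_pow, mul_comm (16 * 8 ^ j)]

end Transfer

theorem measure_projection_convexHull_le {V : Type*} [NormedAddCommGroup V]
    [InnerProductSpace ℝ V] [FiniteDimensional ℝ V] [MeasurableSpace V] [BorelSpace V]
    (H : Submodule ℝ V) [Nontrivial H] (τ : Measure V) [τ.IsAddHaarMeasure] (μ : Measure H)
    [μ.IsAddHaarMeasure] {K : Set V} (hK : IsCompact K) (hK_conv : Convex ℝ K)
    (h0 : 0 ∈ interior K) (hK_bar : ∫ x in K, x ∂τ = 0 ∨ ∫ x in polarSet K, x ∂τ = 0)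
    {j : ℕ} (hj : (Module.finrank ℝ H : ℝ) ≤ 2 ^ 2 ^ j) :
    μ (H.orthogonalProjectionOnto '' convexHull ℝ (K ∪ -K)) ≤
      (8 * rsFactor (Module.finrank ℝ V) (Module.finrank ℝ H) * (16 * 8 ^ j)) ^
        Module.finrank ℝ H * μ (H.orthogonalProjectionOnto '' (K ∩ -K)) := by
  rcases hK_bar with hK_bar | hK_bar
  · have h_one : (1 : ℝ≥0∞) ≤ 16 * 8 ^ j :=
      one_le_mul (by norm_num) (one_le_pow₀ (by norm_num))
    refine (measure_projection_convexHull_le_of_barycenter_eq_zero H τ μ hK hK_conv h0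
      hK_bar).trans ?_
    exact mul_le_mul_left (pow_le_pow_left' (le_mul_of_one_le_right' h_one) _) _
  · exact measure_projection_convexHull_le_of_polar_barycenter_eq_zero H τ μ hK hK_conv h0
      hK_bar hj

section VolumeRadius

theorem hausdorffMeasure_projSet {n : ℕ} (H : Submodule ℝ (EuclideanSpace ℝ (Fin n)))
    (S : Set (EuclideanSpace ℝ (Fin n))) {d : ℝ} (hd : 0 ≤ d) :
    μH[d] (projSet H S) = μH[d] (H.orthogonalProjectionOnto '' S) := by
  have h_coe : projSet H S = Subtype.val '' (H.orthogonalProjectionOnto '' S) :=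
    (image_image _ _ _).symm
  rw [h_coe, isometry_subtype_coe.hausdorffMeasure_image (Or.inl hd)]

theorem vrad_projSet_le {n k : ℕ} (hk : k ≠ 0) (H : Submodule ℝ (EuclideanSpace ℝ (Fin n)))
    {S T : Set (EuclideanSpace ℝ (Fin n))} {c : ℝ≥0∞}
    (h_le : μH[k] (H.orthogonalProjectionOnto '' S) ≤
      c ^ k * μH[k] (H.orthogonalProjectionOnto '' T)) :
    vrad k H (projSet H S) ≤ c * vrad k H (projSet H T) := by
  simp only [vrad, hausdorffMeasure_projSet H _ k.cast_nonneg]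
  set b := μH[k] (closedBall (0 : EuclideanSpace ℝ (Fin n)) 1 ∩ (H : Set _))
  calc (μH[k] (H.orthogonalProjectionOnto '' S) / b) ^ (k : ℝ)⁻¹
      ≤ (c ^ k * (μH[k] (H.orthogonalProjectionOnto '' T) / b)) ^ (k : ℝ)⁻¹ := by
        rw [← mul_div_assoc]
        gcongr
    _ = c * (μH[k] (H.orthogonalProjectionOnto '' T) / b) ^ (k : ℝ)⁻¹ := by
        rw [ENNReal.mul_rpow_of_nonneg _ _ (by positivity), ENNReal.pow_rpow_inv_natCast hk]

end VolumeRadius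

section LogBound

theorem exists_le_two_pow_two_pow {x : ℝ} (hx : 2 ≤ x) :
    ∃ j : ℕ, x ≤ 2 ^ 2 ^ j ∧ (2 : ℝ) ^ j ≤ 2 * (Real.log x / Real.log 2) := by
  have h_log : 0 < Real.log 2 := Real.log_pos one_lt_two
  have h_one : 1 ≤ Real.log x / Real.log 2 :=
    (one_le_div h_log).2 (Real.log_le_log two_pos hx)
  obtain ⟨m, h_lower, h_upper⟩ := exists_nat_pow_near h_one one_lt_two
  refine ⟨m + 1, ?_, by rw [pow_succ']; gcongr⟩
  rw [div_lt_iff₀ h_log] at h_upper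
  rw [← Real.log_le_log_iff (by positivity) (by positivity), Real.log_pow]
  exact_mod_cast h_upper.le

/-- The absolute constant `C` in the bound `(n / k) * C * (log n) ^ 3`: a factor `8 * e` comes from
the comparison for centred bodies and `16 * (2 / log 2) ^ 3` from the comparison of volume
products. -/
def logCubeConst : ℝ := 1024 * Real.exp 1 / Real.log 2 ^ 3

theorem logCubeConst_pos : 0 < logCubeConst :=
  div_pos (by positivity) (pow_pos (Real.log_pos one_lt_two) 3)

theorem rsFactor_mul_le_logCubeConst {n j : ℕ} (k : ℕ)
    (hj : (2 : ℝ) ^ j ≤ 2 * (Real.log n / Real.log 2)) :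
    8 * rsFactor n k * (16 * 8 ^ j) ≤
      ENNReal.ofReal (n / k * logCubeConst * Real.log n ^ 3) := by
  have h_eight : (8 : ℝ≥0∞) = ENNReal.ofReal 8 := by norm_num
  have h_sixteen : (16 : ℝ≥0∞) = ENNReal.ofReal 16 := by norm_num
  rw [rsFactor, h_eight, h_sixteen, ← ENNReal.ofReal_pow (by norm_num),
    ← ENNReal.ofReal_mul (by norm_num), ← ENNReal.ofReal_mul (by norm_num),
    ← ENNReal.ofReal_mul (by positivity)]
  refine ENNReal.ofReal_le_ofReal ?_
  calc 8 * (Real.exp 1 * n / k) * (16 * 8 ^ j)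
      = 8 * (Real.exp 1 * n / k) * (16 * (2 ^ j) ^ 3) := by
        rw [← pow_mul, mul_comm j, pow_mul]
        norm_num
    _ ≤ 8 * (Real.exp 1 * n / k) * (16 * (2 * (Real.log n / Real.log 2)) ^ 3) := by gcongr
    _ = n / k * logCubeConst * Real.log n ^ 3 := by
        rw [logCubeConst]
        ring

end LogBound

theorem stmt0_general :
    ∃ C : ℝ, 0 < C ∧ ∀ (n : ℕ), 2 ≤ n →
      ∀ K : Set (EuclideanSpace ℝ (Fin n)),
        IsCompact K → Convex ℝ K → (0 : EuclideanSpace ℝ (Fin n)) ∈ interior K →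
        ((∫ x in K, x) = 0 ∨ (∫ x in polarBody K, x) = 0) →
        ∀ k : ℕ, 1 ≤ k →
          ∀ H : Submodule ℝ (EuclideanSpace ℝ (Fin n)), Module.finrank ℝ H = k →
            vrad k H (projSet H (convexHull ℝ (K ∪ -K))) ≤
              ENNReal.ofReal (((n : ℝ) / k) * C * (Real.log n) ^ 3) *
                vrad k H (projSet H (K ∩ -K)) := by
  refine ⟨logCubeConst, logCubeConst_pos, ?_⟩
  rintro n hn K hK hK_conv h0 hK_bar _ hk H rfl
  have : Nontrivial H := Module.nontrivial_of_finrank_pos hk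
  have h_dim : Module.finrank ℝ (EuclideanSpace ℝ (Fin n)) = n := by simp
  obtain ⟨j, hn_le, hj⟩ := exists_le_two_pow_two_pow (Nat.ofNat_le_cast.2 hn : (2 : ℝ) ≤ n)
  have hH_le : (Module.finrank ℝ H : ℝ) ≤ n := by exact_mod_cast H.finrank_le.trans_eq h_dim
  have h_measure := measure_projection_convexHull_le H volume μH[Module.finrank ℝ H] hK hK_conv
    h0 hK_bar (hH_le.trans hn_le)
  rw [h_dim] at h_measure
  exact (vrad_projSet_le (Nat.one_le_iff_ne_zero.1 hk) H h_measure).trans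
    (mul_le_mul_left (rsFactor_mul_le_logCubeConst _ hj) _)

/-- Theorem (projections of the outer and inner regularizations): for a convex body `K` with
barycenter of `K` or of `K°` at the origin,
`vrad(P_H(K_out)) ≤ (n/k)·C·(log n)³ · vrad(P_H(K_in))`. -/
theorem stmt0 :
    ∃ C : ℝ, 0 < C ∧ ∀ (n : ℕ), 2 ≤ n →
      ∀ K : Set (EuclideanSpace ℝ (Fin n)),
        IsCompact K → Convex ℝ K → (0 : EuclideanSpace ℝ (Fin n)) ∈ interior K →
        ((∫ x in K, x) = 0 ∨ (∫ x in polarBody K, x) = 0) →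
        ∀ k : ℕ, 1 ≤ k → k ≤ n - 1 →
          ∀ H : Submodule ℝ (EuclideanSpace ℝ (Fin n)), Module.finrank ℝ H = k →
            vrad k H (projSet H (convexHull ℝ (K ∪ -K))) ≤
              ENNReal.ofReal (((n : ℝ) / k) * C * (Real.log n) ^ 3) *
                vrad k H (projSet H (K ∩ -K)) := by
  obtain ⟨C, hC, h_vrad⟩ := stmt0_general
  exact ⟨C, hC, fun n hn K hK hK_conv h0 hK_bar k hk _ => h_vrad n hn K hK hK_conv h0 hK_bar k hk⟩
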